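/- arXiv:1409.3013 — 2 statements merged into one kernel-verified Lean document; each statement's English description precedes it below -/
import Mathlib

section
/- One-block estimate. There exists a finite constant C such that for every γ > 0, limsup_{ℓ→∞} limsup_{n→∞} sup_g { γ·∫ W_f^ℓ(ξ) g(ξ)² dν_ρ(ξ) + (1/n)·⟨g, L_n g⟩ } ≤ C, where the supremum is over all functions g: Ω_n → ℝ with ∫ g² dν_ρ = 1. -/
/-!
The limsup is bounded by a constant independent of `γ` because, as `n → ∞`, the exclusion energy
equilibrates a block of fixed length `ℓ`, and on an equilibrated block `f` has almost the mean
`f̄` of the block density.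

* Walker part. As `c⁺ + c⁻ = 1` with `c^± ≥ 0` and the shifts preserve `ν_ρ`, Young's inequality
  bounds its contribution to `(1/n)⟨g, L_n g⟩` by `1/2`. What remains is `-(n/2) D(g)`, where
  `D = energy` is the sum over bonds of `∫ (g(η^{x,x+1}) − g)² dν_ρ` (`generator_bound`).
* Block part. With `k` the number of particles in the block, `f̄(k/ℓ)` is exactly the mean of `f`
  over `m` sites of the block sampled with replacement (`fbar_blockAvg`). So `W_f^ℓ` is an average
  over maps `j : {1,…,m} → {1,…,ℓ}` of `f − f(η ∘ j)`. Non-injective `j` form a proportion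
  `repRatio` tending to `0` as `ℓ → ∞`, and each contributes at most `2‖f‖`. For injective `j`,
  `f(η ∘ j) = f(σ η)` with `σ` a permutation of the block; moving `σ` onto `g` by exchangeability,
  the term is at most `‖f‖ ((A/2) ∫ (g(η ∘ σ) − g)² dν_ρ + 2/A)` for each `A > 0`
  (`injective_term`).
* Energy of a permutation. Adjacent exchanges generate the permutations of the block, so
  `∫ (g(η ∘ σ) − g)² dν_ρ ≤ K D(g)` with `K` depending on `ℓ` but not on `n`
  (`exists_block_cost`).

Taking `A` proportional to `n`, the cost `γ‖f‖(A/2) K D(g)` is absorbed by `(n/2) D(g)`, and the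
total is at most `1/2 + O_ℓ(1/n) + 2γ‖f‖ repRatio m ℓ`, which gives the claim with `C = 1`.
-/

open Filter

noncomputable section

/-- Expectation with respect to the product Bernoulli(ρ) measure `ν_ρ` on
configurations `Ω_n = {0,1}^{ℤ/nℤ}`. -/
def nuExp (n : ℕ) [NeZero n] (ρ : ℝ) (φ : (ZMod n → Bool) → ℝ) : ℝ :=
  ∑ η : ZMod n → Bool, (∏ x : ZMod n, (if η x then ρ else 1 - ρ)) * φ η

/-- The configuration `η^{x,y}`, obtained from `η` by exchanging the values at `x` and `y`. -/
def swapConf {n : ℕ} (η : ZMod n → Bool) (x y : ZMod n) : ZMod n → Bool :=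
  fun z => if z = x then η y else if z = y then η x else η z

/-- The shifted configuration `τ_z η`, with `(τ_z η)(x) = η(x + z)`. -/
def shiftConf {n : ℕ} (η : ZMod n → Bool) (z : ZMod n) : ZMod n → Bool :=
  fun x => η (x + z)

/-- Lift of a (local) function on `{0,1}^ℤ` to the discrete torus `ℤ/nℤ`,
via the canonical projection `ℤ → ℤ/nℤ`.  For a local function and `n` large
this agrees with the lift through the identification of `ℤ/nℤ` with the window
`{⌊−n/2⌋+1, …, ⌊n/2⌋}`. -/
def liftFn {n : ℕ} (c : (ℤ → Bool) → ℝ) (η : ZMod n → Bool) : ℝ :=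
  c (fun k => η (k : ZMod n))

/-- The generator of the environment seen from the walker:
`L_n g(η) = n² Σ_x (g(η^{x,x+1}) − g(η)) + n Σ_{z=±1} c^z(η)(g(τ_z η) − g(η))`,
with `c^±` lifted from `{0,1}^ℤ`. -/
def Lgen (n : ℕ) [NeZero n] (cp cm : (ℤ → Bool) → ℝ) (g : (ZMod n → Bool) → ℝ)
    (η : ZMod n → Bool) : ℝ :=
  (n : ℝ) ^ 2 * ∑ x : ZMod n, (g (swapConf η x (x + 1)) - g η)
    + (n : ℝ) * (liftFn cp η * (g (shiftConf η 1) - g η)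
      + liftFn cm η * (g (shiftConf η (-1)) - g η))

/-- `f̄(θ)`: the expectation of a local function `f` with support in `{1,…,m}`
under the product Bernoulli(θ) measure. -/
def fbar (m : ℕ) (f : (ℤ → Bool) → ℝ) (θ : ℝ) : ℝ :=
  ∑ ζ : Fin m → Bool, (∏ j : Fin m, (if ζ j then θ else 1 - θ)) *
    f (fun k => if h : 1 ≤ k ∧ k ≤ (m : ℤ) then ζ ⟨(k - 1).toNat, by omega⟩ else false)

/-- The empirical density `(1/ℓ) Σ_{x=1}^ℓ ξ(x)` of the block `{1,…,ℓ}`. -/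
def blockAvg (n : ℕ) [NeZero n] (ℓ : ℕ) (η : ZMod n → Bool) : ℝ :=
  (1 / (ℓ : ℝ)) * ∑ x ∈ Finset.Icc 1 ℓ, (if η ((x : ℤ) : ZMod n) then (1 : ℝ) else 0)

/-- `W_f^ℓ(ξ) = f(ξ) − f̄((1/ℓ) Σ_{x=1}^ℓ ξ(x))`. -/
def Wf (n : ℕ) [NeZero n] (m : ℕ) (f : (ℤ → Bool) → ℝ) (ℓ : ℕ) (η : ZMod n → Bool) : ℝ :=
  liftFn f η - fbar m f (blockAvg n ℓ η)

/-- The variational quantity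
`sup_g { γ ∫ W_f^ℓ g² dν_ρ + (1/n) ⟨g, L_n g⟩ }`, the supremum being over all
`g : Ω_n → ℝ` with `∫ g² dν_ρ = 1` (an extended real number; `⊥` for `n = 0`). -/
def oneBlockSup (ρ : ℝ) (cp cm f : (ℤ → Bool) → ℝ) (m : ℕ) (γ : ℝ) (ℓ n : ℕ) : EReal :=
  if h : n = 0 then ⊥
  else
    letI : NeZero n := ⟨h⟩
    sSup {v : EReal | ∃ g : (ZMod n → Bool) → ℝ,
      nuExp n ρ (fun η => (g η) ^ 2) = 1 ∧
      v = ((γ * nuExp n ρ (fun η => Wf n m f ℓ η * (g η) ^ 2)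
            + (1 / (n : ℝ)) * nuExp n ρ (fun η => g η * Lgen n cp cm g η) : ℝ) : EReal)}

/-! ### The Bernoulli expectation -/

lemma nuExp_mono {n : ℕ} [NeZero n] {ρ : ℝ} (h0 : 0 < ρ) (h1 : ρ < 1)
    {φ ψ : (ZMod n → Bool) → ℝ} (h : ∀ η, φ η ≤ ψ η) : nuExp n ρ φ ≤ nuExp n ρ ψ := by
  unfold nuExp
  refine Finset.sum_le_sum fun η _ => mul_le_mul_of_nonneg_left (h η) ?_
  refine Finset.prod_nonneg fun x _ => ?_
  split_ifs <;> linarith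

lemma nuExp_add {n : ℕ} [NeZero n] (ρ : ℝ) (φ ψ : (ZMod n → Bool) → ℝ) :
    nuExp n ρ (fun η => φ η + ψ η) = nuExp n ρ φ + nuExp n ρ ψ := by
  simp only [nuExp, mul_add, Finset.sum_add_distrib]

lemma nuExp_const_mul {n : ℕ} [NeZero n] (ρ c : ℝ) (φ : (ZMod n → Bool) → ℝ) :
    nuExp n ρ (fun η => c * φ η) = c * nuExp n ρ φ := by
  simp only [nuExp, Finset.mul_sum]
  exact Finset.sum_congr rfl fun η _ => by ring

lemma nuExp_sub {n : ℕ} [NeZero n] (ρ : ℝ) (φ ψ : (ZMod n → Bool) → ℝ) :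
    nuExp n ρ (fun η => φ η - ψ η) = nuExp n ρ φ - nuExp n ρ ψ := by
  simp only [nuExp, mul_sub, Finset.sum_sub_distrib]

lemma nuExp_sum {n : ℕ} [NeZero n] (ρ : ℝ) {ι : Type*} (s : Finset ι)
    (φ : ι → (ZMod n → Bool) → ℝ) :
    nuExp n ρ (fun η => ∑ i ∈ s, φ i η) = ∑ i ∈ s, nuExp n ρ (φ i) := by
  simp only [nuExp, Finset.mul_sum]
  exact Finset.sum_comm

lemma nuExp_nonneg {n : ℕ} [NeZero n] {ρ : ℝ} (h0 : 0 < ρ) (h1 : ρ < 1)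
    {φ : (ZMod n → Bool) → ℝ} (h : ∀ η, 0 ≤ φ η) : 0 ≤ nuExp n ρ φ := by
  have := nuExp_mono h0 h1 (φ := fun _ => 0) h
  simpa [nuExp] using this

/-- A product measure with identical marginals is exchangeable: `ν_ρ` is invariant under any
relabelling of the sites. -/
lemma nuExp_comp_perm {n : ℕ} [NeZero n] (ρ : ℝ) (σ : Equiv.Perm (ZMod n))
    (φ : (ZMod n → Bool) → ℝ) : nuExp n ρ (fun η => φ (η ∘ σ)) = nuExp n ρ φ := by
  unfold nuExp
  refine Fintype.sum_equiv (σ.symm.arrowCongr (Equiv.refl Bool)) _ _ fun η => ?_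
  have e : (σ.symm.arrowCongr (Equiv.refl Bool)) η = η ∘ σ := by
    ext x; simp
  rw [e]
  congr 1
  exact (Equiv.prod_comp σ fun x => if η x then ρ else 1 - ρ).symm

lemma swapConf_eq {n : ℕ} (η : ZMod n → Bool) (x y : ZMod n) :
    swapConf η x y = η ∘ Equiv.swap x y := by
  ext z
  simp only [swapConf, Function.comp, Equiv.swap_apply_def]
  split_ifs <;> rfl

lemma shiftConf_eq {n : ℕ} (η : ZMod n → Bool) (z : ZMod n) :
    shiftConf η z = η ∘ Equiv.addRight z := by
  ext x; simp [shiftConf]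

/-! ### The Dirichlet form -/

/-- The exclusion energy `Σ_x ∫ (g(η^{x,x+1}) − g(η))² dν_ρ`, without the usual factor `1/2`. -/
def energy (n : ℕ) [NeZero n] (ρ : ℝ) (g : (ZMod n → Bool) → ℝ) : ℝ :=
  ∑ x : ZMod n, nuExp n ρ (fun η => (g (η ∘ Equiv.swap x (x + 1)) - g η) ^ 2)

/-- Summation by parts for an exchange of sites, with no boundary term by exchangeability. -/
lemma nuExp_mul_swap {n : ℕ} [NeZero n] (ρ : ℝ) (g : (ZMod n → Bool) → ℝ)
    (σ : Equiv.Perm (ZMod n)) :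
    nuExp n ρ (fun η => g η * (g (η ∘ σ) - g η))
      = -(1 / 2) * nuExp n ρ (fun η => (g (η ∘ σ) - g η) ^ 2) := by
  have h := nuExp_comp_perm ρ σ (fun η => g η ^ 2)
  have e : (fun η : ZMod n → Bool => g η * (g (η ∘ σ) - g η))
      = fun η => -(1 / 2) * (g (η ∘ σ) - g η) ^ 2
          + (1 / 2) * (g (η ∘ σ) ^ 2 - g η ^ 2) := by
    funext η; ring
  rw [e, nuExp_add, nuExp_const_mul, nuExp_const_mul, nuExp_sub, h]
  ring

/-- The quadratic form of `L_n`: the exclusion part yields the energy, and the walker part is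
bounded because `c⁺, c⁻ ∈ [0,1]` and the shifts preserve `ν_ρ`. -/
lemma generator_bound {n : ℕ} [NeZero n] {ρ : ℝ} (h0 : 0 < ρ) (h1 : ρ < 1)
    {cp cm : (ℤ → Bool) → ℝ}
    (hcp01 : ∀ ξ, cp ξ ∈ Set.Icc (0 : ℝ) 1) (hcm01 : ∀ ξ, cm ξ ∈ Set.Icc (0 : ℝ) 1)
    (hsum : ∀ ξ, cp ξ + cm ξ = 1)
    (g : (ZMod n → Bool) → ℝ) (hg : nuExp n ρ (fun η => (g η) ^ 2) = 1) :
    (1 / (n : ℝ)) * nuExp n ρ (fun η => g η * Lgen n cp cm g η)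
      ≤ 1 / 2 - (n : ℝ) / 2 * energy n ρ g := by
  have hn : (n : ℝ) ≠ 0 := Nat.cast_ne_zero.mpr (NeZero.ne n)
  have e : (fun η : ZMod n → Bool => g η * Lgen n cp cm g η)
      = fun η => (n : ℝ) ^ 2 * (∑ x : ZMod n, g η * (g (η ∘ Equiv.swap x (x + 1)) - g η))
        + (n : ℝ) * (g η * (liftFn cp η * (g (η ∘ Equiv.addRight 1) - g η)
          + liftFn cm η * (g (η ∘ Equiv.addRight (-1)) - g η))) := by
    funext η
    simp only [Lgen, swapConf_eq, shiftConf_eq, ← Finset.mul_sum]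
    ring
  have hp := nuExp_comp_perm ρ (Equiv.addRight (1 : ZMod n)) (fun η => g η ^ 2)
  have hm := nuExp_comp_perm ρ (Equiv.addRight (-1 : ZMod n)) (fun η => g η ^ 2)
  have hb : nuExp n ρ (fun η => g η * (liftFn cp η * (g (η ∘ Equiv.addRight 1) - g η)
          + liftFn cm η * (g (η ∘ Equiv.addRight (-1)) - g η))) ≤ 1 / 2 := by
    have := nuExp_mono h0 h1 (n := n)
      (φ := fun η => g η * (liftFn cp η * (g (η ∘ Equiv.addRight 1) - g η)
          + liftFn cm η * (g (η ∘ Equiv.addRight (-1)) - g η)))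
      (ψ := fun η => (1 / 2) * ((g (η ∘ Equiv.addRight 1) ^ 2
          + g (η ∘ Equiv.addRight (-1)) ^ 2) - g η ^ 2)) ?_
    · rw [nuExp_const_mul, nuExp_sub, nuExp_add, hp, hm, hg] at this
      linarith
    · intro η
      have a := hcp01 (fun k => η (k : ZMod n))
      have b := hcm01 (fun k => η (k : ZMod n))
      have c := hsum (fun k => η (k : ZMod n))
      simp only [liftFn]
      set p := cp (fun k => η (k : ZMod n))
      set q := cm (fun k => η (k : ZMod n))
      set u := g (η ∘ Equiv.addRight 1)
      set v := g (η ∘ Equiv.addRight (-1))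
      have hq : q = 1 - p := by linarith
      rw [hq] at b ⊢
      have h1 : 0 ≤ p * (g η - u) ^ 2 := mul_nonneg a.1 (sq_nonneg _)
      have h2 : 0 ≤ (1 - p) * (g η - v) ^ 2 := mul_nonneg b.1 (sq_nonneg _)
      have h3 : 0 ≤ (1 - p) * u ^ 2 := mul_nonneg b.1 (sq_nonneg _)
      have h4 : 0 ≤ p * v ^ 2 := mul_nonneg a.1 (sq_nonneg _)
      nlinarith
  rw [e, nuExp_add, nuExp_const_mul, nuExp_const_mul, nuExp_sum]
  simp only [nuExp_mul_swap]
  rw [← Finset.mul_sum, mul_add]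
  have e2 : (1 / (n : ℝ)) * ((n : ℝ) ^ 2 * (-(1 / 2) * energy n ρ g))
      = -((n : ℝ) / 2 * energy n ρ g) := by field_simp
  have e3 : ∀ t : ℝ, (1 / (n : ℝ)) * ((n : ℝ) * t) = t := fun t => by field_simp
  rw [show (∑ x : ZMod n, nuExp n ρ (fun η => (g (η ∘ Equiv.swap x (x + 1)) - g η) ^ 2))
    = energy n ρ g from rfl, e2, e3]
  linarith

lemma energy_nonneg {n : ℕ} [NeZero n] {ρ : ℝ} (h0 : 0 < ρ) (h1 : ρ < 1)
    (g : (ZMod n → Bool) → ℝ) : 0 ≤ energy n ρ g :=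
  Finset.sum_nonneg fun _ _ => nuExp_nonneg h0 h1 fun _ => sq_nonneg _

/-! ### Moving particles inside the block -/

/-- The block `{1,…,ℓ}` inside the torus: `i : Fin ℓ` is sent to the site `i + 1`. -/
def site (n ℓ : ℕ) (h : ℓ ≤ n) : Fin ℓ ↪ ZMod n where
  toFun i := ((i : ℕ) : ZMod n) + 1
  inj' := by
    intro i j hij
    have hij : ((i : ℕ) : ZMod n) = ((j : ℕ) : ZMod n) := add_right_cancel hij
    have := congrArg ZMod.val hij
    rw [ZMod.val_natCast_of_lt (i.2.trans_le h), ZMod.val_natCast_of_lt (j.2.trans_le h)] at this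
    exact Fin.ext this

/-- A permutation of the block, extended by the identity to the torus. -/
def blockPerm (n ℓ : ℕ) (h : ℓ ≤ n) : Equiv.Perm (Fin ℓ) →* Equiv.Perm (ZMod n) :=
  Equiv.Perm.viaEmbeddingHom (site n ℓ h)

lemma blockPerm_site {n ℓ : ℕ} (h : ℓ ≤ n) (σ : Equiv.Perm (Fin ℓ)) (i : Fin ℓ) :
    blockPerm n ℓ h σ (site n ℓ h i) = site n ℓ h (σ i) :=
  Equiv.Perm.viaEmbedding_apply _ _ _

lemma blockPerm_swap {n ℓ : ℕ} (h : ℓ ≤ n) (a b : Fin ℓ) :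
    blockPerm n ℓ h (Equiv.swap a b) = Equiv.swap (site n ℓ h a) (site n ℓ h b) := by
  ext1 z
  by_cases hz : z ∈ Set.range (site n ℓ h)
  · obtain ⟨i, rfl⟩ := hz
    rw [blockPerm_site]
    exact (site n ℓ h).injective.map_swap a b i
  · rw [Equiv.swap_apply_of_ne_of_ne (fun e => hz ⟨a, e.symm⟩) (fun e => hz ⟨b, e.symm⟩)]
    exact Equiv.Perm.viaEmbedding_apply_of_notMem _ _ _ hz

/-- A permutation of the block costs at most a constant times the energy. The constant does not
depend on the size of the torus, since adjacent transpositions of the block generate. -/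
lemma exists_perm_cost {ρ : ℝ} (h0 : 0 < ρ) (h1 : ρ < 1) (ℓ : ℕ)
    (σ : Equiv.Perm (Fin (ℓ + 1))) :
    ∃ K : ℝ, 0 ≤ K ∧ ∀ (n : ℕ) [NeZero n] (h : ℓ + 1 ≤ n) (g : (ZMod n → Bool) → ℝ),
      nuExp n ρ (fun η => (g (η ∘ blockPerm n (ℓ + 1) h σ) - g η) ^ 2) ≤ K * energy n ρ g := by
  have hσ : σ ∈ Submonoid.closure
      (Set.range fun i : Fin ℓ ↦ Equiv.swap i.castSucc i.succ) := by
    rw [Equiv.Perm.mclosure_swap_castSucc_succ]; trivial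
  -- Adjacent exchanges cost at most the energy itself, and costs of products are controlled by
  -- `(a + b)² ≤ 2a² + 2b²` and the invariance of `ν_ρ`.
  induction hσ using Submonoid.closure_induction with
  | mem σ hσ =>
    obtain ⟨i, rfl⟩ := hσ
    refine ⟨1, zero_le_one, fun n _ h g => ?_⟩
    have e : site n (ℓ + 1) h i.succ = site n (ℓ + 1) h i.castSucc + 1 := by
      show ((i.succ : ℕ) : ZMod n) + 1 = ((i.castSucc : ℕ) : ZMod n) + 1 + 1
      simp
    simp only [blockPerm_swap, e, one_mul]
    exact Finset.single_le_sum
      (f := fun x : ZMod n => nuExp n ρ (fun η => (g (η ∘ Equiv.swap x (x + 1)) - g η) ^ 2))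
      (fun x _ => nuExp_nonneg h0 h1 fun _ => sq_nonneg _) (Finset.mem_univ _)
  | one =>
    refine ⟨0, le_rfl, fun n _ h g => ?_⟩
    simp [nuExp]
  | mul σ τ _ _ hσ hτ =>
    obtain ⟨K, hK, HK⟩ := hσ
    obtain ⟨J, hJ, HJ⟩ := hτ
    refine ⟨2 * (K + J), by positivity, fun n _ h g => ?_⟩
    set s := blockPerm n (ℓ + 1) h σ with hs
    set t := blockPerm n (ℓ + 1) h τ with ht
    have e : blockPerm n (ℓ + 1) h (σ * τ) = s * t := map_mul _ _ _
    have a := nuExp_comp_perm ρ s (fun η => (g (η ∘ t) - g η) ^ 2)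
    have b := nuExp_mono h0 h1
      (φ := fun η => (g (η ∘ (s * t : Equiv.Perm (ZMod n))) - g η) ^ 2)
      (ψ := fun η => 2 * ((g ((η ∘ s) ∘ t) - g (η ∘ s)) ^ 2 + (g (η ∘ s) - g η) ^ 2))
      (fun η => by
        have : η ∘ (s * t : Equiv.Perm (ZMod n)) = (η ∘ s) ∘ t := rfl
        rw [this]
        nlinarith [sq_nonneg ((g ((η ∘ s) ∘ t) - g (η ∘ s)) - (g (η ∘ s) - g η))])
    rw [nuExp_const_mul, nuExp_add, a] at b
    rw [e]
    have := HK n h g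
    have := HJ n h g
    linarith

/-- One constant serves all permutations of the block. -/
lemma exists_block_cost {ρ : ℝ} (h0 : 0 < ρ) (h1 : ρ < 1) (ℓ : ℕ) :
    ∃ K : ℝ, 0 ≤ K ∧ ∀ (n : ℕ) [NeZero n] (h : ℓ + 1 ≤ n) (g : (ZMod n → Bool) → ℝ)
      (σ : Equiv.Perm (Fin (ℓ + 1))),
      nuExp n ρ (fun η => (g (η ∘ blockPerm n (ℓ + 1) h σ) - g η) ^ 2) ≤ K * energy n ρ g := by
  choose K hK HK using exists_perm_cost h0 h1 ℓ
  refine ⟨∑ σ, K σ, Finset.sum_nonneg fun σ _ => hK σ, fun n _ h g σ => (HK σ n h g).trans ?_⟩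
  exact mul_le_mul_of_nonneg_right
    (Finset.single_le_sum (f := K) (fun σ _ => hK σ) (Finset.mem_univ σ)) (energy_nonneg h0 h1 g)

/-! ### The block density as sampling with replacement -/

/-- The configuration on `ℤ` equal to `ζ` on `{1,…,m}` and empty elsewhere. -/
def extConf (m : ℕ) (ζ : Fin m → Bool) : ℤ → Bool :=
  fun k => if h : 1 ≤ k ∧ k ≤ (m : ℤ) then ζ ⟨(k - 1).toNat, by omega⟩ else false

lemma blockAvg_eq {n : ℕ} [NeZero n] {ℓ : ℕ} (h : ℓ ≤ n) (η : ZMod n → Bool) :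
    blockAvg n ℓ η = (1 / (ℓ : ℝ)) * ∑ i : Fin ℓ, (if η (site n ℓ h i) then (1 : ℝ) else 0) := by
  unfold blockAvg
  congr 1
  rw [← Finset.Ico_add_one_right_eq_Icc, Finset.sum_Ico_eq_sum_range, Finset.sum_range]
  refine Finset.sum_congr rfl fun i _ => ?_
  have : (((1 + (i : ℕ) : ℕ) : ℤ) : ZMod n) = site n ℓ h i := by
    show _ = ((i : ℕ) : ZMod n) + 1
    push_cast
    ring
  rw [this]

/-- The Bernoulli marginal at the empirical density is the proportion of block sites with the
given occupation. -/
lemma marginal_eq {n : ℕ} [NeZero n] {ℓ : ℕ} (hℓ : 0 < ℓ) (h : ℓ ≤ n) (η : ZMod n → Bool)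
    (b : Bool) :
    (if b then blockAvg n ℓ η else 1 - blockAvg n ℓ η)
      = ∑ i : Fin ℓ, (1 / (ℓ : ℝ)) * (if η (site n ℓ h i) = b then (1 : ℝ) else 0) := by
  rw [← Finset.mul_sum, blockAvg_eq h]
  cases b with
  | true => simp
  | false =>
    have hℓ' : (ℓ : ℝ) ≠ 0 := by positivity
    have e : ∑ i : Fin ℓ, (if η (site n ℓ h i) = false then (1 : ℝ) else 0)
        = ℓ - ∑ i : Fin ℓ, (if η (site n ℓ h i) then (1 : ℝ) else 0) := by
      rw [eq_sub_iff_add_eq, ← Finset.sum_add_distrib]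
      trans ∑ i : Fin ℓ, (1 : ℝ)
      · refine Finset.sum_congr rfl fun i _ => ?_
        cases η (site n ℓ h i) <;> simp
      · simp
    rw [e]
    simp only [Bool.false_eq_true, if_false]
    field_simp

/-- Evaluated at the empirical density, `f̄` is the mean of `f` over `m` sites of the block drawn
uniformly with replacement. -/
lemma fbar_blockAvg {n : ℕ} [NeZero n] {ℓ : ℕ} (hℓ : 0 < ℓ) (h : ℓ ≤ n) (m : ℕ)
    (f : (ℤ → Bool) → ℝ) (η : ZMod n → Bool) :
    fbar m f (blockAvg n ℓ η)
      = (1 / (ℓ : ℝ) ^ m) *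
        ∑ j : Fin m → Fin ℓ, f (extConf m fun i => η (site n ℓ h (j i))) := by
  have e1 : ∀ ζ : Fin m → Bool,
      ∏ i : Fin m, (if ζ i then blockAvg n ℓ η else 1 - blockAvg n ℓ η)
        = ∑ j : Fin m → Fin ℓ, (1 / (ℓ : ℝ) ^ m) *
            (if (fun i => η (site n ℓ h (j i))) = ζ then (1 : ℝ) else 0) := by
    intro ζ
    rw [Finset.prod_congr rfl fun i _ => marginal_eq hℓ h η (ζ i), Finset.prod_univ_sum]
    simp only [Fintype.piFinset_univ]
    refine Finset.sum_congr rfl fun j _ => ?_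
    rw [Finset.prod_mul_distrib, Finset.prod_const, Finset.card_univ, Fintype.card_fin,
      Fintype.prod_boole, one_div_pow]
    simp only [funext_iff]
    congr!
  show ∑ ζ : Fin m → Bool, (∏ i : Fin m, (if ζ i then blockAvg n ℓ η else 1 - blockAvg n ℓ η))
    * f (extConf m ζ) = _
  simp only [e1, Finset.sum_mul]
  rw [Finset.sum_comm, Finset.mul_sum]
  refine Finset.sum_congr rfl fun j _ => ?_
  simp

lemma local_eq_extConf {f : (ℤ → Bool) → ℝ} {m : ℕ}
    (hfloc : ∀ ξ ζ : ℤ → Bool, (∀ k : ℤ, 1 ≤ k → k ≤ (m : ℤ) → ξ k = ζ k) → f ξ = f ζ)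
    (ξ : ℤ → Bool) : f ξ = f (extConf m fun i => ξ ((i : ℕ) + 1)) := by
  refine hfloc _ _ fun k h1 h2 => ?_
  have : (((k - 1).toNat : ℕ) : ℤ) + 1 = k := by omega
  simp only [extConf, h1, h2, and_self, dif_pos, this]

lemma exists_bound {f : (ℤ → Bool) → ℝ} {m : ℕ}
    (hfloc : ∀ ξ ζ : ℤ → Bool, (∀ k : ℤ, 1 ≤ k → k ≤ (m : ℤ) → ξ k = ζ k) → f ξ = f ζ) :
    ∃ M : ℝ, 0 ≤ M ∧ ∀ ξ, |f ξ| ≤ M := by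
  refine ⟨∑ ζ : Fin m → Bool, |f (extConf m ζ)|, Finset.sum_nonneg fun _ _ => abs_nonneg _,
    fun ξ => ?_⟩
  rw [local_eq_extConf hfloc ξ]
  exact Finset.single_le_sum (f := fun ζ : Fin m → Bool => |f (extConf m ζ)|)
    (fun _ _ => abs_nonneg _) (Finset.mem_univ _)

/-- Sampling `f` at distinct sites of the block amounts to permuting the block. -/
lemma exists_perm_of_injective {f : (ℤ → Bool) → ℝ} {m : ℕ}
    (hfloc : ∀ ξ ζ : ℤ → Bool, (∀ k : ℤ, 1 ≤ k → k ≤ (m : ℤ) → ξ k = ζ k) → f ξ = f ζ)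
    {n : ℕ} [NeZero n] {ℓ : ℕ} (hm : m ≤ ℓ) (h : ℓ ≤ n) {j : Fin m → Fin ℓ}
    (hj : Function.Injective j) :
    ∃ σ : Equiv.Perm (Fin ℓ), ∀ η : ZMod n → Bool,
      liftFn f (η ∘ blockPerm n ℓ h σ) = f (extConf m fun i => η (site n ℓ h (j i))) := by
  obtain ⟨σ, hσ⟩ := Equiv.Perm.exists_extending_pair (Fin.castLE hm) j
    (Fin.castLE_injective hm) hj
  refine ⟨σ, fun η => ?_⟩
  unfold liftFn
  rw [local_eq_extConf hfloc]
  congr 2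
  funext i
  have e : ((((i : ℕ) : ℤ) + 1 : ℤ) : ZMod n) = site n ℓ h (Fin.castLE hm i) := by
    show _ = (((Fin.castLE hm i : Fin ℓ) : ℕ) : ZMod n) + 1
    push_cast
    rfl
  simp only [Function.comp, e, blockPerm_site]
  congr 2
  exact hσ i

/-! ### The estimate for fixed block and torus -/

/-- Replacing `f` by its sample at distinct sites costs a small multiple of the energy: the
permutation is moved onto `g²`, and `|u² − v²| ≤ (A/2)(u − v)² + (1/2A)(u + v)²`. -/
lemma injective_term {ρ : ℝ} (h0 : 0 < ρ) (h1 : ρ < 1) {n : ℕ} [NeZero n]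
    {F : (ZMod n → Bool) → ℝ} {M : ℝ} (hM : 0 ≤ M) (hF : ∀ η, |F η| ≤ M)
    {g : (ZMod n → Bool) → ℝ} (hg : nuExp n ρ (fun η => (g η) ^ 2) = 1)
    (σ : Equiv.Perm (ZMod n)) {E A : ℝ} (hA : 0 < A)
    (hE : nuExp n ρ (fun η => (g (η ∘ σ) - g η) ^ 2) ≤ E) :
    nuExp n ρ (fun η => (F η - F (η ∘ σ)) * (g η) ^ 2) ≤ M * (A / 2 * E + 2 / A) := by
  have a := nuExp_comp_perm ρ σ (fun η => F η * (g η) ^ 2)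
  have hg' := nuExp_comp_perm ρ σ (fun η => (g η) ^ 2)
  have e : nuExp n ρ (fun η => (F η - F (η ∘ σ)) * (g η) ^ 2)
      = nuExp n ρ (fun η => F (η ∘ σ) * (g (η ∘ σ) ^ 2 - g η ^ 2)) := by
    simp only [sub_mul, mul_sub, nuExp_sub]
    rw [a]
  have b := nuExp_mono h0 h1
    (φ := fun η => F (η ∘ σ) * (g (η ∘ σ) ^ 2 - g η ^ 2))
    (ψ := fun η => M * (A / 2 * (g (η ∘ σ) - g η) ^ 2
      + 1 / A * (g (η ∘ σ) ^ 2 + g η ^ 2))) (fun η => by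
      set u := g (η ∘ σ)
      set v := g η
      have key : |u ^ 2 - v ^ 2| ≤ A / 2 * (u - v) ^ 2 + 1 / A * (u ^ 2 + v ^ 2) := by
        have hA' : A * (1 / A) = 1 := by field_simp
        have hp : 0 < 1 / A := by positivity
        have t1 : A / 2 * (u - v) ^ 2 + 1 / A * (u ^ 2 + v ^ 2)
            = 1 / (2 * A) * ((A * (u - v)) ^ 2 + (u + v) ^ 2) + 1 / (2 * A) * (u - v) ^ 2 := by
          field_simp
          ring
        have t2 : u ^ 2 - v ^ 2 = 1 / (2 * A) * (2 * (A * (u - v)) * (u + v)) := by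
          field_simp
          ring
        have hq : 0 ≤ 1 / (2 * A) := by positivity
        have t3 : 0 ≤ 1 / (2 * A) * (u - v) ^ 2 := by positivity
        rw [t1, t2, abs_le]
        have s1 := mul_nonneg hq (sq_nonneg (A * (u - v) + (u + v)))
        have s2 := mul_nonneg hq (sq_nonneg (A * (u - v) - (u + v)))
        constructor <;> nlinarith
      calc F (η ∘ σ) * (u ^ 2 - v ^ 2) ≤ |F (η ∘ σ) * (u ^ 2 - v ^ 2)| := le_abs_self _
        _ = |F (η ∘ σ)| * |u ^ 2 - v ^ 2| := abs_mul _ _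
        _ ≤ _ := mul_le_mul (hF _) key (abs_nonneg _) hM)
  rw [nuExp_const_mul, nuExp_add, nuExp_const_mul, nuExp_const_mul, nuExp_add, hg', hg] at b
  rw [e]
  refine b.trans (mul_le_mul_of_nonneg_left ?_ hM)
  have := mul_le_mul_of_nonneg_left hE (by positivity : 0 ≤ A / 2)
  have e2 : 1 / A * (1 + 1) = 2 / A := by ring
  linarith

/-- The proportion of non-injective maps among all maps `Fin m → Fin ℓ`. -/
def repRatio (m ℓ : ℕ) : ℝ := 1 - (ℓ.descFactorial m : ℝ) / (ℓ : ℝ) ^ m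

lemma card_not_injective (m ℓ : ℕ) :
    ((Finset.univ.filter fun j : Fin m → Fin ℓ => ¬ Function.Injective j).card : ℝ)
      = (ℓ : ℝ) ^ m - ℓ.descFactorial m := by
  have a := Finset.card_filter_add_card_filter_not (s := (Finset.univ : Finset (Fin m → Fin ℓ)))
    (fun j => Function.Injective j)
  have b : (Finset.univ.filter fun j : Fin m → Fin ℓ => Function.Injective j).card
      = ℓ.descFactorial m := by
    rw [← Fintype.card_subtype, Fintype.card_congr (Equiv.subtypeInjectiveEquivEmbedding _ _),
      Fintype.card_embedding_eq]
    simp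
  rw [b] at a
  simp only [Finset.card_univ, Fintype.card_fun, Fintype.card_fin] at a
  have a' : ((ℓ.descFactorial m + (Finset.univ.filter fun j : Fin m → Fin ℓ =>
    ¬ Function.Injective j).card : ℕ) : ℝ) = ((ℓ ^ m : ℕ) : ℝ) := by rw [a]
  push_cast at a'
  linarith

lemma repRatio_tendsto (m : ℕ) :
    Tendsto (fun ℓ : ℕ => repRatio m (ℓ + 1)) atTop (nhds 0) := by
  have hlim : Tendsto (fun ℓ : ℕ => 1 - (1 - (m : ℝ) * (1 / ((ℓ : ℝ) + 1))) ^ m) atTop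
      (nhds 0) := by
    have := ((tendsto_one_div_add_atTop_nhds_zero_nat (𝕜 := ℝ)).const_mul (m : ℝ)).const_sub 1
    have := (this.pow m).const_sub 1
    simpa using this
  refine tendsto_of_tendsto_of_tendsto_of_le_of_le' tendsto_const_nhds hlim ?_ ?_
  · filter_upwards with ℓ
    have hp : (0 : ℝ) < ((ℓ + 1 : ℕ) : ℝ) ^ m := by positivity
    have := Nat.descFactorial_le_pow (ℓ + 1) m
    have h2 : ((ℓ + 1).descFactorial m : ℝ) ≤ ((ℓ + 1 : ℕ) : ℝ) ^ m := by exact_mod_cast this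
    exact sub_nonneg.mpr ((div_le_one hp).mpr h2)
  · filter_upwards [eventually_ge_atTop m] with ℓ hℓ
    have hp : (0 : ℝ) < ((ℓ + 1 : ℕ) : ℝ) ^ m := by positivity
    have h1 : (ℓ + 1 - m) ^ m ≤ (ℓ + 1).descFactorial m :=
      (Nat.pow_le_pow_left (by omega) m).trans (Nat.pow_sub_le_descFactorial (ℓ + 1) m)
    have h2 : ((ℓ : ℝ) + 1 - m) ^ m ≤ ((ℓ + 1).descFactorial m : ℝ) := by
      have : (((ℓ + 1 - m : ℕ) : ℝ)) ^ m ≤ ((ℓ + 1).descFactorial m : ℝ) := by exact_mod_cast h1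
      rw [Nat.cast_sub (by omega)] at this
      push_cast at this
      exact this
    refine sub_le_sub_left ?_ _
    rw [le_div_iff₀ hp, ← mul_pow]
    refine le_of_eq_of_le ?_ h2
    congr 1
    push_cast
    field_simp

/-- The block part of the variational problem: `∫ W_f^ℓ g²` averages one term per map
`j : Fin m → Fin ℓ`. Injective `j` are controlled by the energy, and the others contribute at most
`2M` each. -/
lemma Wf_bound {ρ : ℝ} (h0 : 0 < ρ) (h1 : ρ < 1) {f : (ℤ → Bool) → ℝ} {m : ℕ}
    (hfloc : ∀ ξ ζ : ℤ → Bool, (∀ k : ℤ, 1 ≤ k → k ≤ (m : ℤ) → ξ k = ζ k) → f ξ = f ζ)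
    {M : ℝ} (hM : 0 ≤ M) (hf : ∀ ξ, |f ξ| ≤ M) {ℓ : ℕ} (hm : m ≤ ℓ + 1)
    {K : ℝ} (hK : 0 ≤ K) {n : ℕ} [NeZero n] (h : ℓ + 1 ≤ n) {g : (ZMod n → Bool) → ℝ}
    (hg : nuExp n ρ (fun η => (g η) ^ 2) = 1)
    (HK : ∀ σ : Equiv.Perm (Fin (ℓ + 1)),
      nuExp n ρ (fun η => (g (η ∘ blockPerm n (ℓ + 1) h σ) - g η) ^ 2) ≤ K * energy n ρ g)
    {A : ℝ} (hA : 0 < A) :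
    nuExp n ρ (fun η => Wf n m f (ℓ + 1) η * (g η) ^ 2)
      ≤ M * (A / 2 * (K * energy n ρ g) + 2 / A) + 2 * M * repRatio m (ℓ + 1) := by
  classical
  set R := M * (A / 2 * (K * energy n ρ g) + 2 / A) with hR
  have hR0 : 0 ≤ R := by
    have := energy_nonneg h0 h1 g
    positivity
  set L : ℝ := ((ℓ + 1 : ℕ) : ℝ) ^ m with hL
  have hL0 : 0 < L := by positivity
  have hcard : (∑ _j : Fin m → Fin (ℓ + 1), (1 : ℝ)) = L := by
    simp [hL]
  let T : (Fin m → Fin (ℓ + 1)) → (ZMod n → Bool) → ℝ := fun j η =>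
    (liftFn f η - f (extConf m fun i => η (site n (ℓ + 1) h (j i)))) * (g η) ^ 2
  have e : (fun η : ZMod n → Bool => Wf n m f (ℓ + 1) η * (g η) ^ 2)
      = fun η => (1 / L) * ∑ j : Fin m → Fin (ℓ + 1), T j η := by
    funext η
    simp only [T, Wf]
    rw [fbar_blockAvg (Nat.succ_pos ℓ) h, ← hL, ← Finset.sum_mul, Finset.sum_sub_distrib,
      show (∑ _j : Fin m → Fin (ℓ + 1), liftFn f η) = L * liftFn f η by
        rw [← hcard, Finset.sum_mul]; simp]
    field_simp
  have hT : ∀ j, nuExp n ρ (T j) ≤ R + 2 * M * (if ¬ Function.Injective j then 1 else 0) := by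
    intro j
    by_cases hj : Function.Injective j
    · obtain ⟨σ, hσ⟩ := exists_perm_of_injective (n := n) hfloc hm h hj
      have := injective_term h0 h1 (F := liftFn f) hM (fun η => hf _) hg
        (blockPerm n (ℓ + 1) h σ) hA (HK σ)
      simp only [hσ] at this
      simpa [hj, T] using this
    · have b := nuExp_mono h0 h1 (φ := T j) (ψ := fun η => 2 * M * (g η) ^ 2) (fun η => by
        refine mul_le_mul_of_nonneg_right ?_ (sq_nonneg _)
        have a1 := abs_le.mp (hf (fun k => η (k : ZMod n)))
        have a2 := abs_le.mp (hf (extConf m fun i => η (site n (ℓ + 1) h (j i))))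
        show f _ - f _ ≤ _
        linarith)
      rw [nuExp_const_mul, hg] at b
      simp only [hj, not_false_eq_true, if_true]
      linarith
  rw [e, nuExp_const_mul, nuExp_sum]
  have hs := Finset.sum_le_sum fun j (_ : j ∈ (Finset.univ : Finset (Fin m → Fin (ℓ + 1)))) => hT j
  rw [Finset.sum_add_distrib, Finset.sum_const, ← Finset.mul_sum, Finset.sum_boole,
    card_not_injective, Finset.card_univ, Fintype.card_fun, Fintype.card_fin, Fintype.card_fin,
    nsmul_eq_mul, Nat.cast_pow, ← hL] at hs
  have hs' := mul_le_mul_of_nonneg_left hs (by positivity : 0 ≤ 1 / L)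
  refine hs'.trans (le_of_eq ?_)
  rw [repRatio, ← hL]
  field_simp

/-! ### Passage to the limit -/

/-- **One-block estimate.** There is a finite constant `C` such that
for every `γ > 0`,
`limsup_{ℓ→∞} limsup_{n→∞} sup_g { γ ⟨W_f^ℓ, g²⟩ + (1/n)⟨g, L_n g⟩ } ≤ C`. -/
theorem one_block_estimate
    (ρ : ℝ) (hρ0 : 0 < ρ) (hρ1 : ρ < 1)
    (cp cm : (ℤ → Bool) → ℝ)
    (hcp01 : ∀ ξ, cp ξ ∈ Set.Icc (0 : ℝ) 1) (hcm01 : ∀ ξ, cm ξ ∈ Set.Icc (0 : ℝ) 1)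
    (hsum : ∀ ξ, cp ξ + cm ξ = 1)
    (hcploc : ∃ s : Finset ℤ, ∀ ξ ζ : ℤ → Bool, (∀ k ∈ s, ξ k = ζ k) → cp ξ = cp ζ)
    (hcmloc : ∃ s : Finset ℤ, ∀ ξ ζ : ℤ → Bool, (∀ k ∈ s, ξ k = ζ k) → cm ξ = cm ζ)
    (f : (ℤ → Bool) → ℝ) (m : ℕ)
    (hfloc : ∀ ξ ζ : ℤ → Bool, (∀ k : ℤ, 1 ≤ k → k ≤ (m : ℤ) → ξ k = ζ k) → f ξ = f ζ) :
    ∃ C : ℝ, ∀ γ : ℝ, 0 < γ →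
      limsup (fun ℓ : ℕ =>
          limsup (fun n : ℕ => oneBlockSup ρ cp cm f m γ ℓ n) atTop) atTop
        ≤ (C : EReal) := by
  obtain ⟨M, hM, hf⟩ := exists_bound hfloc
  refine ⟨1, fun γ hγ => ?_⟩
  have hrep : ∀ᶠ ℓ : ℕ in atTop, γ * (2 * M * repRatio m (ℓ + 1)) < 1 / 4 := by
    have := ((repRatio_tendsto m).const_mul (2 * M)).const_mul γ
    rw [mul_zero, mul_zero] at this
    exact this.eventually_lt_const (by norm_num)
  have hmain : ∀ᶠ ℓ : ℕ in atTop,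
      limsup (fun n : ℕ => oneBlockSup ρ cp cm f m γ (ℓ + 1) n) atTop ≤ ((1 : ℝ) : EReal) := by
    filter_upwards [hrep, eventually_ge_atTop m] with ℓ hℓ hmℓ
    obtain ⟨K, hK, HK⟩ := exists_block_cost hρ0 hρ1 ℓ
    set B : ℝ := γ * M * K + 1 with hB
    have hB0 : 0 < B := by positivity
    have hlim : ∀ᶠ n : ℕ in atTop, 2 * γ * M * B / (n : ℝ) < 1 / 4 :=
      (tendsto_const_div_atTop_nhds_zero_nat (2 * γ * M * B)).eventually_lt_const (by norm_num)
    refine limsup_le_of_le (h := ?_)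
    filter_upwards [hlim, eventually_ge_atTop (ℓ + 1)] with n hn hnℓ
    have hn0 : n ≠ 0 := by omega
    have : NeZero n := ⟨hn0⟩
    rw [oneBlockSup, dif_neg hn0]
    refine sSup_le ?_
    rintro v ⟨g, hg, rfl⟩
    have hnpos : (0 : ℝ) < n := by positivity
    rw [EReal.coe_le_coe_iff]
    have a := generator_bound hρ0 hρ1 hcp01 hcm01 hsum g hg
    -- This choice of `A` makes the cost of the permutations at most the available energy.
    have b := Wf_bound hρ0 hρ1 hfloc hM hf (by omega) hK hnℓ hg (HK n hnℓ g)
      (A := n / B) (by positivity)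
    have b' := mul_le_mul_of_nonneg_left b hγ.le
    have hD := energy_nonneg hρ0 hρ1 g
    have c : γ * (M * (n / B / 2 * (K * energy n ρ g))) ≤ n / 2 * energy n ρ g := by
      have e : γ * (M * (n / B / 2 * (K * energy n ρ g)))
          = (γ * M * K / B) * (n / 2 * energy n ρ g) := by ring
      rw [e]
      refine mul_le_of_le_one_left (by positivity) ?_
      rw [div_le_one hB0]
      linarith
    have d : γ * (M * (2 / (n / B))) = 2 * γ * M * B / n := by
      field_simp
    rw [mul_add, mul_add M, mul_add γ, d] at b'
    linarith
  refine limsup_le_of_le (h := ?_)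
  obtain ⟨N, hN⟩ := eventually_atTop.mp hmain
  filter_upwards [eventually_ge_atTop (N + 1)] with ℓ hℓ
  obtain ⟨k, rfl⟩ : ∃ k, ℓ = k + 1 := ⟨ℓ - 1, by omega⟩
  exact hN k (by omega)

end
end

section
/- Let π: [0,T] × 𝕋 → [0,1] be Borel measurable, and assume there exist M > 0 and a Borel measurable function π̇: [0,T] × 𝕋 → ℝ with |π̇| ≤ M such that π(t,x) = π(0,x) + ∫₀ᵗ π̇(s,x) ds for all t and x. If sup_{H ∈ C^{1,2}} J(H;π) < ∞, then for almost every t ∈ [0,T] the function x ↦ π(t,x) agrees almost everywhere on 𝕋 with a 1/2-Hölder continuous function. -/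
/-!
The functional `J` is tested on `H(t,x) = ∑_{k ∈ S} a_k(t) cas_k(x)`, where
`cas_k(x) = cos(2πkx) + sin(2πkx)` are the Hartley functions, a real orthonormal system with
`cas_k' = 2πk cas_{-k}`. Let `h_k(t) = ∫ π(t,x) cas_k(x) dx`.

Because `π` is `M`-Lipschitz in time (`lipschitz_of_ac`), an integration by parts in time bounds the
boundary and `∂_t H` terms of `J(H;π)` below by `-∫∫ (M² + H²/4)` (`ibp_lower`, `boundary_lower`).
As `π(1-π) ≤ 1/4`, the gradient term costs at most `∫ ∑ π²k² a_k²`, and the Laplacian contributes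
`∫ ∑ 8π²k² a_k h_k`. Hence (`Jfun_trig_lower`)
`J(H;π) ≥ ∫₀ᵀ ∑ (8π²k² a_k h_k - (1/4 + π²k²) a_k²) dt - T M²`.
The `h_k` are continuous in time, so polynomials `a_k` may be taken uniformly close to them by the
Weierstrass theorem. The bound on `J` then gives `∑ k² ∫₀ᵀ h_k² dt < ∞` (`energy_bound`), and
`∑ k² h_k(t)² < ∞` for almost every `t` (`ae_summable`).

For such a `t` the Fourier coefficients `c_n` of `π(t,·)` satisfy `∑ n² |c_n|² < ∞`. The Fourier
series converges absolutely to a continuous `G`, equal to `π(t,·)` almost everywhere, and with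
`h = |x - y|`
`|G(x) - G(y)| ≤ (√h / 2) ∑ n² |c_n|² + (1 / (2√h)) ∑ |e_n(x) - e_n(y)|² / n²`,
where the last sum is at most `4π² h` by the series of the second Bernoulli polynomial
(`hasSum_sq_dist`). This is the `1/2`-Hölder bound (`holder_of_summable`).
-/

open MeasureTheory

noncomputable section

/-- Time derivative `∂_t H`. -/
def gradT (H : ℝ → ℝ → ℝ) : ℝ → ℝ → ℝ := fun t x => deriv (fun s => H s x) t

/-- Space derivative `∇H`. -/
def gradX (H : ℝ → ℝ → ℝ) : ℝ → ℝ → ℝ := fun t x => deriv (H t) x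

/-- Second space derivative `ΔH`. -/
def lapX (H : ℝ → ℝ → ℝ) : ℝ → ℝ → ℝ := fun t x => deriv (deriv (H t)) x

/-- `H : [0,T] × 𝕋 → ℝ` is of class `C^{1,2}`: `1`-periodic in space, continuous,
once continuously differentiable in time and twice continuously differentiable
in space (the circle `𝕋 = ℝ/ℤ` is represented by `1`-periodic functions on `ℝ`). -/
def IsC12 (H : ℝ → ℝ → ℝ) : Prop :=
  (∀ t x, H t (x + 1) = H t x) ∧ Continuous (Function.uncurry H) ∧
    (∀ x, Differentiable ℝ (fun s => H s x)) ∧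
    Continuous (Function.uncurry (gradT H)) ∧
    (∀ t, Differentiable ℝ (H t)) ∧
    Continuous (Function.uncurry (gradX H)) ∧
    (∀ t, Differentiable ℝ (gradX H t)) ∧
    Continuous (Function.uncurry (lapX H))

/-- The exclusion large-deviation functional
`J(H;π) = π_T(H_T) − π_0(H_0) − ∫₀ᵀ π_t(∂_t H + 2ΔH) dt − ∫₀ᵀ ∫ (∇H)² π(1−π) dx dt`. -/
def Jfun (T : ℝ) (H π : ℝ → ℝ → ℝ) : ℝ :=
  (∫ x in Set.Ioc (0 : ℝ) 1, π T x * H T x)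
    - (∫ x in Set.Ioc (0 : ℝ) 1, π 0 x * H 0 x)
    - (∫ t in Set.Ioc 0 T, ∫ x in Set.Ioc (0 : ℝ) 1,
        π t x * (gradT H t x + 2 * lapX H t x))
    - (∫ t in Set.Ioc 0 T, ∫ x in Set.Ioc (0 : ℝ) 1,
        (gradX H t x) ^ 2 * (π t x * (1 - π t x)))

/-! ### Hartley functions -/

/-- The Hartley function `cas_k(x) = cos(2πkx) + sin(2πkx)` of frequency `k`. As `k` runs over `ℤ`
these functions form a real orthonormal basis of `L²(𝕋)`, so one real coefficient per integer
replaces the usual sine and cosine pair. -/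
def cas (k : ℤ) (x : ℝ) : ℝ := Real.cos (2 * Real.pi * k * x) + Real.sin (2 * Real.pi * k * x)

/-- Differentiation maps `cas_k` to a multiple of `cas_{-k}`; this is why the trigonometric sums
below carry a frequency map `σ`. -/
lemma cas_hasDerivAt (k : ℤ) (x : ℝ) :
    HasDerivAt (cas k) (2 * Real.pi * k * cas (-k) x) x := by
  have h : HasDerivAt (fun x : ℝ => 2 * Real.pi * k * x) (2 * Real.pi * k) x := by
    simpa using (hasDerivAt_id x).const_mul (2 * Real.pi * (k : ℝ))
  refine (h.cos.add h.sin).congr_deriv ?_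
  simp only [cas, Int.cast_neg, mul_neg, neg_mul, Real.cos_neg, Real.sin_neg]
  ring

@[fun_prop]
lemma cas_continuous (k : ℤ) : Continuous (cas k) := by
  unfold cas; fun_prop

lemma cas_add_one (k : ℤ) (x : ℝ) : cas k (x + 1) = cas k x := by
  have h : 2 * Real.pi * k * (x + 1) = 2 * Real.pi * k * x + k * (2 * Real.pi) := by ring
  simp only [cas, h, Real.cos_add_int_mul_two_pi, Real.sin_add_int_mul_two_pi]

lemma abs_cas_le (k : ℤ) (x : ℝ) : |cas k x| ≤ 2 :=
  (abs_add_le _ _).trans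
    (by linarith [Real.abs_cos_le_one (2 * Real.pi * k * x), Real.abs_sin_le_one (2 * Real.pi * k * x)])

lemma integral_cos_freq (k : ℤ) :
    ∫ x in Set.Ioc (0 : ℝ) 1, Real.cos (2 * Real.pi * k * x) = if k = 0 then 1 else 0 := by
  rw [← intervalIntegral.integral_of_le zero_le_one]
  split_ifs with h
  · simp [h]
  · have h2 : 2 * Real.pi * (k : ℝ) ≠ 0 := by positivity
    rw [intervalIntegral.integral_comp_mul_left (fun y => Real.cos y) h2, integral_cos]
    have : 2 * Real.pi * (k : ℝ) * 1 = 0 + k * (2 * Real.pi) := by ring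
    rw [this, Real.sin_add_int_mul_two_pi]
    simp

lemma integral_sin_freq (k : ℤ) :
    ∫ x in Set.Ioc (0 : ℝ) 1, Real.sin (2 * Real.pi * k * x) = 0 := by
  rw [← intervalIntegral.integral_of_le zero_le_one]
  by_cases h : k = 0
  · simp [h]
  · have h2 : 2 * Real.pi * (k : ℝ) ≠ 0 := by positivity
    rw [intervalIntegral.integral_comp_mul_left (fun y => Real.sin y) h2, integral_sin]
    have : 2 * Real.pi * (k : ℝ) * 1 = 0 + k * (2 * Real.pi) := by ring
    rw [this, Real.cos_add_int_mul_two_pi]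
    simp

lemma integral_cas_mul_cas (j k : ℤ) :
    ∫ x in Set.Ioc (0 : ℝ) 1, cas j x * cas k x = if j = k then 1 else 0 := by
  have h : ∀ x, cas j x * cas k x = Real.cos (2 * Real.pi * ((j - k : ℤ) : ℝ) * x)
      + Real.sin (2 * Real.pi * ((j + k : ℤ) : ℝ) * x) := by
    intro x
    have e1 : 2 * Real.pi * ((j - k : ℤ) : ℝ) * x = 2 * Real.pi * j * x - 2 * Real.pi * k * x := by
      push_cast; ring
    have e2 : 2 * Real.pi * ((j + k : ℤ) : ℝ) * x = 2 * Real.pi * j * x + 2 * Real.pi * k * x := by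
      push_cast; ring
    rw [e1, e2, Real.cos_sub, Real.sin_add]
    simp only [cas]
    ring
  simp_rw [h]
  rw [integral_add, integral_cos_freq, integral_sin_freq]
  · simp [sub_eq_zero]
  · exact (by fun_prop : Continuous _).integrableOn_Ioc
  · exact (by fun_prop : Continuous _).integrableOn_Ioc

/-- Parseval's identity for a finite sum with distinct frequencies `σ k`. -/
lemma integral_sq_sum_cas (S : Finset ℤ) (σ : ℤ → ℤ) (hσ : Function.Injective σ) (a : ℤ → ℝ) :
    ∫ x in Set.Ioc (0 : ℝ) 1, (∑ k ∈ S, a k * cas (σ k) x) ^ 2 = ∑ k ∈ S, a k ^ 2 := by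
  have h : ∀ x, (∑ k ∈ S, a k * cas (σ k) x) ^ 2
      = ∑ j ∈ S, ∑ k ∈ S, (a j * a k) * (cas (σ j) x * cas (σ k) x) := by
    intro x
    rw [sq, Finset.sum_mul_sum]
    exact Finset.sum_congr rfl fun j _ => Finset.sum_congr rfl fun k _ => by ring
  simp_rw [h]
  rw [integral_finsetSum _ fun j _ => (by fun_prop : Continuous _).integrableOn_Ioc]
  refine Finset.sum_congr rfl fun j hj => ?_
  rw [integral_finsetSum _ fun k _ => (by fun_prop : Continuous _).integrableOn_Ioc]
  simp_rw [integral_const_mul, integral_cas_mul_cas, hσ.eq_iff]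
  simp [hj, sq]

/-! ### Integration by parts in time -/

/-- For an `M`-Lipschitz `F`, the expression `[F p] - ∫ F p'` equals `∫ F' p`, and
`|F' p| ≤ M |p| ≤ M² + p² / 4`. -/
lemma ibp_lower {T M : ℝ} (hT : 0 < T) (hM : 0 < M) {F p p' : ℝ → ℝ}
    (hF : LipschitzOnWith M.toNNReal F (Set.Icc 0 T))
    (hp : ∀ t, HasDerivAt p (p' t) t) (hp' : Continuous p') :
    -(∫ t in Set.Ioc 0 T, (M ^ 2 + p t ^ 2 / 4)) ≤
      F T * p T - F 0 * p 0 - ∫ t in Set.Ioc 0 T, F t * p' t := by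
  have hder : deriv p = p' := funext fun t => (hp t).deriv
  have hpc : Continuous p := continuous_iff_continuousAt.2 fun t => (hp t).continuousAt
  have hpC1 : ContDiff ℝ 1 p := contDiff_one_iff_deriv.2 ⟨fun t => (hp t).differentiableAt, hder ▸ hp'⟩
  have hFa : AbsolutelyContinuousOnInterval F 0 T :=
    LipschitzOnWith.absolutelyContinuousOnInterval (by rwa [Set.uIcc_of_le hT.le])
  have hpa : AbsolutelyContinuousOnInterval p 0 T :=
    hpC1.contDiffOn.absolutelyContinuousOnInterval
  have key := hFa.integral_mul_deriv_eq_deriv_mul hpa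
  rw [hder, intervalIntegral.integral_of_le hT.le, intervalIntegral.integral_of_le hT.le] at key
  rw [key, sub_sub_cancel, neg_le]
  -- On the open interval `[0,T]` is a neighbourhood of `t`, so the Lipschitz bound controls
  -- `deriv F t` (which is `0` at points of non-differentiability).
  rw [← integral_neg, integral_Ioc_eq_integral_Ioo, integral_Ioc_eq_integral_Ioo]
  have hint := (hFa.intervalIntegrable_deriv.mul_continuousOn hpa.continuousOn).1
  refine setIntegral_mono_on (hint.mono_set Set.Ioo_subset_Ioc_self).neg
    ((by fun_prop : Continuous _).integrableOn_Ioc.mono_set Set.Ioo_subset_Ioc_self)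
    measurableSet_Ioo fun t ht => ?_
  have hd : |deriv F t| ≤ M := by
    simpa [hM.le] using norm_deriv_le_of_lipschitzOn (Icc_mem_nhds ht.1 ht.2) hF
  have h1 : |deriv F t * p t| ≤ M * |p t| := by
    rw [abs_mul]; gcongr
  nlinarith [neg_abs_le (deriv F t * p t), sq_nonneg (M - |p t| / 2), sq_abs (p t)]

/-! ### Trigonometric test functions and a lower bound for `J` -/

/-- The trigonometric sum `∑_{k ∈ S} c_k(t) cas_{σ k}(x)`. The test functions have `σ = id`; their
space derivatives have `σ k = -k`. -/
def trig (S : Finset ℤ) (σ : ℤ → ℤ) (c : ℤ → ℝ → ℝ) (t x : ℝ) : ℝ :=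
  ∑ k ∈ S, c k t * cas (σ k) x

/-- The Hartley coefficient `∫_𝕋 f cas_k` of a function `f` on the circle. -/
def hcoef (f : ℝ → ℝ) (k : ℤ) : ℝ :=
  ∫ x in Set.Ioc (0 : ℝ) 1, f x * cas k x

lemma trig_continuous (S : Finset ℤ) (σ : ℤ → ℤ) {c : ℤ → ℝ → ℝ} (hc : ∀ k, Continuous (c k)) :
    Continuous (Function.uncurry (trig S σ c)) := by
  unfold Function.uncurry trig
  exact continuous_finsetSum _ fun k _ =>
    ((hc k).comp continuous_fst).mul ((cas_continuous _).comp continuous_snd)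

lemma trig_hasDerivAt_time (S : Finset ℤ) (σ : ℤ → ℤ) {c c' : ℤ → ℝ → ℝ}
    (hc : ∀ k t, HasDerivAt (c k) (c' k t) t) (t x : ℝ) :
    HasDerivAt (fun s => trig S σ c s x) (trig S σ c' t x) t := by
  unfold trig
  exact HasDerivAt.fun_sum fun k _ => (hc k t).mul_const _

lemma trig_hasDerivAt_space (S : Finset ℤ) (σ : ℤ → ℤ) (c : ℤ → ℝ → ℝ) (t x : ℝ) :
    HasDerivAt (trig S σ c t)
      (trig S (fun k => -σ k) (fun k t => 2 * Real.pi * σ k * c k t) t x) x := by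
  unfold trig
  refine (HasDerivAt.fun_sum fun k _ => (cas_hasDerivAt (σ k) x).const_mul (c k t)).congr_deriv ?_
  exact Finset.sum_congr rfl fun k _ => by ring

lemma gradT_trig (S : Finset ℤ) (σ : ℤ → ℤ) {c c' : ℤ → ℝ → ℝ}
    (hc : ∀ k t, HasDerivAt (c k) (c' k t) t) : gradT (trig S σ c) = trig S σ c' := by
  funext t x
  exact (trig_hasDerivAt_time S σ hc t x).deriv

lemma gradX_trig (S : Finset ℤ) (σ : ℤ → ℤ) (c : ℤ → ℝ → ℝ) :
    gradX (trig S σ c) = trig S (fun k => -σ k) (fun k t => 2 * Real.pi * σ k * c k t) := by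
  funext t x
  exact (trig_hasDerivAt_space S σ c t x).deriv

lemma lapX_trig (S : Finset ℤ) (σ : ℤ → ℤ) (c : ℤ → ℝ → ℝ) :
    lapX (trig S σ c) = trig S σ (fun k t => -(2 * Real.pi * σ k) ^ 2 * c k t) := by
  have h : lapX (trig S σ c) = gradX (gradX (trig S σ c)) := rfl
  rw [h, gradX_trig, gradX_trig]
  funext t x
  simp only [trig, neg_neg]
  exact Finset.sum_congr rfl fun k _ => by push_cast; ring

lemma isC12_trig (S : Finset ℤ) (σ : ℤ → ℤ) {c c' : ℤ → ℝ → ℝ}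
    (hc : ∀ k t, HasDerivAt (c k) (c' k t) t) (hc' : ∀ k, Continuous (c' k)) :
    IsC12 (trig S σ c) := by
  have hcc : ∀ k, Continuous (c k) := fun k =>
    continuous_iff_continuousAt.2 fun t => (hc k t).continuousAt
  refine ⟨fun t x => ?_, trig_continuous S σ hcc,
    fun x t => (trig_hasDerivAt_time S σ hc t x).differentiableAt, ?_,
    fun t x => (trig_hasDerivAt_space S σ c t x).differentiableAt, ?_, ?_, ?_⟩
  · simp only [trig, cas_add_one]
  · rw [gradT_trig S σ hc]; exact trig_continuous S σ hc'
  · rw [gradX_trig]; exact trig_continuous _ _ fun k => by fun_prop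
  · rw [gradX_trig]; exact fun t x => (trig_hasDerivAt_space _ _ _ t x).differentiableAt
  · rw [lapX_trig]; exact trig_continuous _ _ fun k => by fun_prop

lemma integrable_mul_prod (T : ℝ) {w Q : ℝ → ℝ → ℝ} (hw : Measurable (Function.uncurry w))
    (hw1 : ∀ t x, |w t x| ≤ 1) (hQ : Continuous (Function.uncurry Q)) :
    Integrable (Function.uncurry fun t x => w t x * Q t x)
      ((volume.restrict (Set.Ioc 0 T)).prod (volume.restrict (Set.Ioc (0 : ℝ) 1))) := by
  have hQi : Integrable (Function.uncurry Q)
      ((volume.restrict (Set.Ioc 0 T)).prod (volume.restrict (Set.Ioc (0 : ℝ) 1))) := by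
    rw [Measure.prod_restrict]
    exact (hQ.continuousOn.integrableOn_compact (isCompact_Icc.prod isCompact_Icc)).mono_set
      (Set.prod_mono Set.Ioc_subset_Icc_self Set.Ioc_subset_Icc_self)
  exact hQi.bdd_mul (c := 1) hw.aestronglyMeasurable (Filter.Eventually.of_forall fun _ => hw1 _ _)

lemma integrable_mul_slice {f q : ℝ → ℝ} (hf : Measurable f) (hf1 : ∀ x, |f x| ≤ 1)
    (hq : Continuous q) (a b : ℝ) : IntegrableOn (fun x => f x * q x) (Set.Ioc a b) :=
  hq.integrableOn_Ioc.bdd_mul (c := 1) hf.aestronglyMeasurable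
    (Filter.Eventually.of_forall fun _ => hf1 _)

lemma integral_mul_trig {π : ℝ → ℝ → ℝ} (hπ : Measurable (Function.uncurry π))
    (h1 : ∀ t x, |π t x| ≤ 1) (S : Finset ℤ) (c : ℤ → ℝ → ℝ) (t : ℝ) :
    ∫ x in Set.Ioc (0 : ℝ) 1, π t x * trig S id c t x = ∑ k ∈ S, c k t * hcoef (π t) k := by
  simp only [trig, Finset.mul_sum, id]
  rw [integral_finsetSum]
  · refine Finset.sum_congr rfl fun k _ => ?_
    rw [hcoef, ← integral_const_mul]
    exact integral_congr_ae (Filter.Eventually.of_forall fun x => by simp only; ring)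
  · intro k _
    exact integrable_mul_slice hπ.of_uncurry_left (h1 t) (by fun_prop) 0 1

/-- Lipschitz continuity of `π` in time passes to its Hartley coefficients. -/
lemma hcoef_continuousOn {T M : ℝ} {π : ℝ → ℝ → ℝ} (hM : 0 < M)
    (hπ : Measurable (Function.uncurry π)) (h1 : ∀ t x, |π t x| ≤ 1)
    (hL : ∀ x, LipschitzOnWith M.toNNReal (fun t => π t x) (Set.Icc 0 T)) (k : ℤ) :
    ContinuousOn (fun t => hcoef (π t) k) (Set.Icc 0 T) := by
  refine (LipschitzOnWith.of_dist_le_mul (K := (M * 2).toNNReal) fun s hs t ht => ?_).continuousOn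
  rw [Real.dist_eq, hcoef, hcoef, ← integral_sub
    (integrable_mul_slice hπ.of_uncurry_left (h1 s) (by fun_prop) 0 1)
    (integrable_mul_slice hπ.of_uncurry_left (h1 t) (by fun_prop) 0 1)]
  have := norm_setIntegral_le_of_norm_le_const (μ := volume) (s := Set.Ioc (0 : ℝ) 1)
    (f := fun x => π s x * cas k x - π t x * cas k x) (C := M * 2 * dist s t) (by simp) ?_
  · simpa [hM.le] using this
  · intro x _
    have h := (hL x).dist_le_mul s hs t ht
    rw [Real.dist_eq, Real.coe_toNNReal _ hM.le] at h
    rw [← sub_mul, norm_mul, Real.norm_eq_abs, Real.norm_eq_abs]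
    calc _ ≤ M * dist s t * 2 := by gcongr; exact abs_cas_le k x
      _ = _ := by ring

/-- `ibp_lower` integrated over the circle: the boundary terms and the `∂_t H` term of `J` are
bounded below by a constant and a zeroth-order term in `H`. Here `G` is `∂_t H`. -/
lemma boundary_lower {T M : ℝ} {π H G : ℝ → ℝ → ℝ} (hT : 0 < T) (hM : 0 < M)
    (hπ : Measurable (Function.uncurry π)) (h1 : ∀ t x, |π t x| ≤ 1)
    (hL : ∀ x, LipschitzOnWith M.toNNReal (fun t => π t x) (Set.Icc 0 T))
    (hH : Continuous (Function.uncurry H)) (hG : Continuous (Function.uncurry G))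
    (hder : ∀ t x, HasDerivAt (fun s => H s x) (G t x) t) :
    -(∫ t in Set.Ioc 0 T, ∫ x in Set.Ioc (0 : ℝ) 1, (M ^ 2 + H t x ^ 2 / 4)) ≤
      (∫ x in Set.Ioc (0 : ℝ) 1, π T x * H T x) - (∫ x in Set.Ioc (0 : ℝ) 1, π 0 x * H 0 x)
        - ∫ t in Set.Ioc 0 T, ∫ x in Set.Ioc (0 : ℝ) 1, π t x * G t x := by
  have hiS : Integrable (Function.uncurry fun t x => M ^ 2 + H t x ^ 2 / 4)
      ((volume.restrict (Set.Ioc 0 T)).prod (volume.restrict (Set.Ioc (0 : ℝ) 1))) := by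
    have := integrable_mul_prod T (w := fun _ _ => 1) (Q := fun t x => M ^ 2 + H t x ^ 2 / 4)
      measurable_const (by simp) (by
        have : Continuous fun p : ℝ × ℝ => M ^ 2 + (Function.uncurry H p) ^ 2 / 4 := by fun_prop
        exact this)
    simpa using this
  have hiG := integrable_mul_prod T hπ h1 hG
  have slice : ∀ t, IntegrableOn (fun x => π t x * H t x) (Set.Ioc 0 1) := fun t =>
    integrable_mul_slice hπ.of_uncurry_left (h1 t)
      (hH.comp (by fun_prop : Continuous fun x => (t, x))) 0 1
  have hiG_x : IntegrableOn (fun x => ∫ t in Set.Ioc 0 T, π t x * G t x) (Set.Ioc 0 1) :=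
    hiG.integral_prod_right
  have hbd : IntegrableOn (fun x => π T x * H T x - π 0 x * H 0 x) (Set.Ioc 0 1) :=
    (slice T).sub (slice 0)
  have hi2 : IntegrableOn (fun x => -∫ t in Set.Ioc 0 T, (M ^ 2 + H t x ^ 2 / 4)) (Set.Ioc 0 1) :=
    hiS.integral_prod_right.neg
  have hi3 : IntegrableOn (fun x => π T x * H T x - π 0 x * H 0 x
      - ∫ t in Set.Ioc 0 T, π t x * G t x) (Set.Ioc 0 1) := hbd.sub hiG_x
  rw [integral_integral_swap hiS, integral_integral_swap hiG, ← integral_neg,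
    ← integral_sub (slice T) (slice 0), ← integral_sub hbd hiG_x]
  refine integral_mono hi2 hi3 fun x => ?_
  have hGx : Continuous fun t => G t x := hG.comp (by fun_prop : Continuous fun t : ℝ => (t, x))
  exact ibp_lower hT hM (hL x) (fun t => hder t x) hGx

set_option maxHeartbeats 400000 in
/-- Lower bound for `J` on trigonometric test functions `H = ∑ a_k(t) cas_k`. The Laplacian produces
the term linear in `a_k`; the quadratic term collects the `H² / 4` of `boundary_lower` and the
gradient term, estimated with `π (1 - π) ≤ 1 / 4`. -/
lemma Jfun_trig_lower {T M : ℝ} {π : ℝ → ℝ → ℝ} (hT : 0 < T) (hM : 0 < M)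
    (hπ : Measurable (Function.uncurry π)) (h01 : ∀ t x, π t x ∈ Set.Icc (0 : ℝ) 1)
    (hL : ∀ x, LipschitzOnWith M.toNNReal (fun t => π t x) (Set.Icc 0 T))
    (S : Finset ℤ) {a a' : ℤ → ℝ → ℝ}
    (ha : ∀ k t, HasDerivAt (a k) (a' k t) t) (ha' : ∀ k, Continuous (a' k)) :
    (∫ t in Set.Ioc 0 T, ∑ k ∈ S, (8 * Real.pi ^ 2 * k ^ 2 * (a k t * hcoef (π t) k)
      - (1 / 4 + Real.pi ^ 2 * k ^ 2) * a k t ^ 2)) - T * M ^ 2 ≤ Jfun T (trig S id a) π := by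
  have h1 : ∀ t x, |π t x| ≤ 1 := fun t x => by
    rw [abs_of_nonneg (h01 t x).1]; exact (h01 t x).2
  have hac : ∀ k, Continuous (a k) := fun k =>
    continuous_iff_continuousAt.2 fun t => (ha k t).continuousAt
  set H := trig S id a with hH
  have hHc : Continuous (Function.uncurry H) := trig_continuous _ _ hac
  have hgT : gradT H = trig S id a' := gradT_trig S id ha
  have hTc : Continuous (Function.uncurry (gradT H)) := hgT ▸ trig_continuous _ _ ha'
  have hXc : Continuous (Function.uncurry (gradX H)) := (isC12_trig S id ha ha').2.2.2.2.2.1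
  have hLc : Continuous (Function.uncurry (lapX H)) := (isC12_trig S id ha ha').2.2.2.2.2.2.2
  have slice : ∀ {Q : ℝ → ℝ → ℝ}, Continuous (Function.uncurry Q) → ∀ t,
      IntegrableOn (fun x => π t x * Q t x) (Set.Ioc 0 1) := fun {Q} hQ t =>
    integrable_mul_slice hπ.of_uncurry_left (h1 t) (hQ.comp (by fun_prop : Continuous fun x => (t, x))) 0 1
  have hiT := integrable_mul_prod T hπ h1 hTc
  have hiL := integrable_mul_prod T hπ h1 hLc
  have hiT_t : IntegrableOn (fun t => ∫ x in Set.Ioc (0 : ℝ) 1, π t x * gradT H t x)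
      (Set.Ioc 0 T) := hiT.integral_prod_left
  have hiL_t : IntegrableOn (fun t => ∫ x in Set.Ioc (0 : ℝ) 1, π t x * lapX H t x)
      (Set.Ioc 0 T) := hiL.integral_prod_left
  have hcc : ∀ (c : ℤ → ℝ), IntegrableOn (fun t => ∑ k ∈ S, c k * a k t ^ 2) (Set.Ioc 0 T) :=
    fun c => (by fun_prop : Continuous _).integrableOn_Ioc
  have e3 : (∫ t in Set.Ioc 0 T, ∫ x in Set.Ioc (0 : ℝ) 1, π t x * (gradT H t x + 2 * lapX H t x))
      = (∫ t in Set.Ioc 0 T, ∫ x in Set.Ioc (0 : ℝ) 1, π t x * gradT H t x)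
        + 2 * ∫ t in Set.Ioc 0 T, ∫ x in Set.Ioc (0 : ℝ) 1, π t x * lapX H t x := by
    rw [← integral_const_mul, ← integral_add hiT_t (hiL_t.const_mul 2)]
    refine integral_congr_ae (Filter.Eventually.of_forall fun t => ?_)
    simp only
    rw [← integral_const_mul, ← integral_add (slice hTc t) ((slice hLc t).const_mul 2)]
    exact integral_congr_ae (Filter.Eventually.of_forall fun x => by simp only; ring)
  have eL : ∀ t, ∫ x in Set.Ioc (0 : ℝ) 1, π t x * lapX H t x
      = - ∑ k ∈ S, 4 * Real.pi ^ 2 * k ^ 2 * (a k t * hcoef (π t) k) := by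
    intro t
    rw [hH, lapX_trig, integral_mul_trig hπ h1, ← Finset.sum_neg_distrib]
    exact Finset.sum_congr rfl fun k _ => by simp only [id]; ring
  have eP : -(T * M ^ 2 + ∫ t in Set.Ioc 0 T, ∑ k ∈ S, 1 / 4 * a k t ^ 2) ≤
      (∫ x in Set.Ioc (0 : ℝ) 1, π T x * H T x) - (∫ x in Set.Ioc (0 : ℝ) 1, π 0 x * H 0 x)
        - ∫ t in Set.Ioc 0 T, ∫ x in Set.Ioc (0 : ℝ) 1, π t x * gradT H t x := by
    have e : T * M ^ 2 + ∫ t in Set.Ioc 0 T, ∑ k ∈ S, 1 / 4 * a k t ^ 2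
        = ∫ t in Set.Ioc 0 T, ∫ x in Set.Ioc (0 : ℝ) 1, (M ^ 2 + H t x ^ 2 / 4) := by
      have : ∀ t, ∫ x in Set.Ioc (0 : ℝ) 1, (M ^ 2 + H t x ^ 2 / 4)
          = M ^ 2 + ∑ k ∈ S, 1 / 4 * a k t ^ 2 := by
        intro t
        have hHt : Continuous (H t) := hHc.comp (by fun_prop : Continuous fun x => (t, x))
        rw [integral_add (by simp) ((by fun_prop : Continuous _).integrableOn_Ioc), integral_div]
        rw [hH]
        unfold trig
        rw [integral_sq_sum_cas S id Function.injective_id, ← Finset.mul_sum]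
        simp
        ring
      simp_rw [this]
      rw [integral_add (by simp) (hcc _)]
      simp [hT.le]
    rw [e]
    refine boundary_lower hT hM hπ h1 hL hHc hTc fun t x => ?_
    rw [hgT]
    exact trig_hasDerivAt_time S id ha t x
  have e4 : (∫ t in Set.Ioc 0 T, ∫ x in Set.Ioc (0 : ℝ) 1, gradX H t x ^ 2 * (π t x * (1 - π t x)))
      ≤ ∫ t in Set.Ioc 0 T, ∑ k ∈ S, Real.pi ^ 2 * k ^ 2 * a k t ^ 2 := by
    have hX2 : Continuous (Function.uncurry fun t x => gradX H t x ^ 2) := hXc.pow 2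
    have hw : Measurable (Function.uncurry fun t x => π t x * (1 - π t x)) :=
      hπ.mul (measurable_const.sub hπ)
    have hw0 : ∀ t x, 0 ≤ π t x * (1 - π t x) := fun t x =>
      mul_nonneg (h01 t x).1 (by linarith [(h01 t x).2])
    have hw4 : ∀ t x, π t x * (1 - π t x) ≤ 1 / 4 := fun t x => by
      nlinarith [sq_nonneg (π t x - 1 / 2)]
    have hw1 : ∀ t x, |π t x * (1 - π t x)| ≤ 1 := fun t x => by
      rw [abs_of_nonneg (hw0 t x)]; linarith [hw4 t x]
    have hi4 := (integrable_mul_prod T hw hw1 hX2).integral_prod_left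
    simp_rw [mul_comm (gradX H _ _ ^ 2)]
    refine integral_mono hi4 (hcc _) fun t => ?_
    have hXt : Continuous (gradX H t) := hXc.comp (by fun_prop : Continuous fun x => (t, x))
    have : ∑ k ∈ S, Real.pi ^ 2 * k ^ 2 * a k t ^ 2
        = ∫ x in Set.Ioc (0 : ℝ) 1, 1 / 4 * gradX H t x ^ 2 := by
      rw [integral_const_mul, hH, gradX_trig]
      unfold trig
      rw [integral_sq_sum_cas S _ (fun i j h => by simpa using h), Finset.mul_sum]
      exact Finset.sum_congr rfl fun k _ => by simp only [id]; ring
    rw [this]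
    refine integral_mono (integrable_mul_slice hw.of_uncurry_left (hw1 t) (hXt.pow 2) 0 1)
      ((by fun_prop : Continuous _).integrableOn_Ioc) fun x => ?_
    exact mul_le_mul_of_nonneg_right (hw4 t x) (sq_nonneg _)
  have hiLint : IntegrableOn (fun t => ∑ k ∈ S, 8 * Real.pi ^ 2 * k ^ 2 * (a k t * hcoef (π t) k))
      (Set.Ioc 0 T) := by
    refine (hiL_t.const_mul (-2)).congr (Filter.Eventually.of_forall fun t => ?_)
    simp only
    rw [eL, neg_mul_neg, Finset.mul_sum]
    exact Finset.sum_congr rfl fun k _ => by ring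
  have eSplit : (∫ t in Set.Ioc 0 T, ∑ k ∈ S, (8 * Real.pi ^ 2 * k ^ 2 * (a k t * hcoef (π t) k)
      - (1 / 4 + Real.pi ^ 2 * k ^ 2) * a k t ^ 2))
      = -2 * (∫ t in Set.Ioc 0 T, ∫ x in Set.Ioc (0 : ℝ) 1, π t x * lapX H t x)
        - (∫ t in Set.Ioc 0 T, ∑ k ∈ S, 1 / 4 * a k t ^ 2)
        - ∫ t in Set.Ioc 0 T, ∑ k ∈ S, Real.pi ^ 2 * k ^ 2 * a k t ^ 2 := by
    have : -2 * (∫ t in Set.Ioc 0 T, ∫ x in Set.Ioc (0 : ℝ) 1, π t x * lapX H t x)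
        = ∫ t in Set.Ioc 0 T, ∑ k ∈ S, 8 * Real.pi ^ 2 * k ^ 2 * (a k t * hcoef (π t) k) := by
      rw [← integral_const_mul]
      refine integral_congr_ae (Filter.Eventually.of_forall fun t => ?_)
      simp only
      rw [eL, neg_mul_neg, Finset.mul_sum]
      exact Finset.sum_congr rfl fun k _ => by ring
    have hsub : IntegrableOn (fun t => ∑ k ∈ S, 8 * Real.pi ^ 2 * k ^ 2 * (a k t * hcoef (π t) k)
        - ∑ k ∈ S, 1 / 4 * a k t ^ 2) (Set.Ioc 0 T) := hiLint.sub (hcc fun _ => 1 / 4)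
    rw [this, ← integral_sub hiLint (hcc fun _ => 1 / 4),
      ← integral_sub hsub (hcc fun k => Real.pi ^ 2 * k ^ 2)]
    refine integral_congr_ae (Filter.Eventually.of_forall fun t => ?_)
    simp only [← Finset.sum_sub_distrib]
    exact Finset.sum_congr rfl fun k _ => by ring
  rw [Jfun, e3, eSplit]
  linarith

/-! ### The energy estimate -/

/-- The partial sums of `∑ k² ∫₀ᵀ h_k(t)² dt`, with `h_k` the Hartley coefficients of `π`, are bounded.
The test function has coefficients `a_k` uniformly close to `h_k`. -/
lemma energy_bound {T M : ℝ} {π : ℝ → ℝ → ℝ} (hT : 0 < T) (hM : 0 < M)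
    (hπ : Measurable (Function.uncurry π)) (h01 : ∀ t x, π t x ∈ Set.Icc (0 : ℝ) 1)
    (hL : ∀ x, LipschitzOnWith M.toNNReal (fun t => π t x) (Set.Icc 0 T))
    (hJ : BddAbove {r : ℝ | ∃ H : ℝ → ℝ → ℝ, IsC12 H ∧ r = Jfun T H π}) :
    ∃ C : ℝ, ∀ S : Finset ℤ,
      ∑ k ∈ S, ∫ t in Set.Ioc 0 T, (k : ℝ) ^ 2 * hcoef (π t) k ^ 2 ≤ C := by
  have h1 : ∀ t x, |π t x| ≤ 1 := fun t x => by
    rw [abs_of_nonneg (h01 t x).1]; exact (h01 t x).2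
  obtain ⟨B, hB⟩ := hJ
  have hcont : ∀ k, ContinuousOn (fun t => hcoef (π t) k) (Set.Icc 0 T) :=
    hcoef_continuousOn hM hπ h1 hL
  refine ⟨(B + T * M ^ 2 + 1) / (4 * Real.pi ^ 2), fun S => ?_⟩
  set L : ℝ := ∑ k ∈ S, 4 * Real.pi ^ 2 * (k : ℝ) ^ 2 with hLdef
  have hL0 : 0 ≤ L := Finset.sum_nonneg fun k _ => by positivity
  -- With this accuracy the approximation error `L δ²`, integrated over `[0,T]`, is at most `1`.
  set δ : ℝ := 1 / (L * T + 1) with hδ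
  have hLT : 0 ≤ L * T := by positivity
  have hδ0 : 0 < δ := by positivity
  have hδ1 : L * T * δ ^ 2 ≤ 1 := by
    have e : δ * (L * T + 1) = 1 := by rw [hδ]; field_simp
    nlinarith
  choose p hp using fun k => exists_polynomial_near_of_continuousOn 0 T _ (hcont k) δ hδ0
  have hder : ∀ k t, HasDerivAt (fun s => (p k).eval s) ((p k).derivative.eval t) t :=
    fun k t => (p k).hasDerivAt t
  have hder_cont : ∀ k, Continuous fun t => (p k).derivative.eval t :=
    fun k => (p k).derivative.continuous
  have hpc : ∀ k, Continuous fun t => (p k).eval t := fun k => (p k).continuous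
  have hlow := Jfun_trig_lower hT hM hπ h01 hL (S.erase 0) hder hder_cont
  have hup : Jfun T (trig (S.erase 0) id fun k s => (p k).eval s) π ≤ B :=
    hB ⟨_, isC12_trig _ _ hder hder_cont, rfl⟩
  -- For `k ≠ 0` one has `1/4 + π²k² ≤ 2π²k²`, and completing the square gives
  -- `8π²k² a h - 2π²k² a² ≥ 4π²k² h² - 4π²k² (a - h)²`.
  have hpoint : ∀ t ∈ Set.Ioc 0 T,
      (∑ k ∈ S, 4 * Real.pi ^ 2 * ((k : ℝ) ^ 2 * hcoef (π t) k ^ 2)) - L * δ ^ 2 ≤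
      ∑ k ∈ S.erase 0, (8 * Real.pi ^ 2 * k ^ 2 * ((p k).eval t * hcoef (π t) k)
        - (1 / 4 + Real.pi ^ 2 * k ^ 2) * (p k).eval t ^ 2) := by
    intro t ht
    rw [hLdef, Finset.sum_mul, ← Finset.sum_sub_distrib, ← Finset.sum_erase S (a := (0 : ℤ)) (by simp)]
    refine Finset.sum_le_sum fun k hk => ?_
    have hk0 : k ≠ 0 := (Finset.mem_erase.1 hk).1
    have hk1 : (1 : ℝ) ≤ (k : ℝ) ^ 2 := by
      have : (1 : ℤ) ≤ k ^ 2 := by have := sq_pos_of_ne_zero hk0; omega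
      exact_mod_cast this
    set a := (p k).eval t
    set h := hcoef (π t) k
    have hq : 1 / 4 ≤ Real.pi ^ 2 * (k : ℝ) ^ 2 := by nlinarith [Real.pi_gt_three]
    have hq0 : 0 ≤ Real.pi ^ 2 * (k : ℝ) ^ 2 := by positivity
    have he : (a - h) ^ 2 ≤ δ ^ 2 :=
      sq_le_sq' (by linarith [abs_lt.1 (hp k t (Set.Ioc_subset_Icc_self ht))])
        (by linarith [abs_lt.1 (hp k t (Set.Ioc_subset_Icc_self ht))])
    have i1 := mul_le_mul_of_nonneg_left he hq0
    have i2 := mul_le_mul_of_nonneg_right hq (sq_nonneg a)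
    have i3 := mul_nonneg hq0 (sq_nonneg a)
    nlinarith
  have hint : ∀ k : ℤ, IntegrableOn (fun t => 4 * Real.pi ^ 2 * ((k : ℝ) ^ 2 * hcoef (π t) k ^ 2))
      (Set.Ioc 0 T) := fun k =>
    ((((hcont k).pow 2).const_mul _).const_mul _).integrableOn_Icc.mono_set Set.Ioc_subset_Icc_self
  have hint2 : IntegrableOn (fun t => ∑ k ∈ S.erase 0,
      (8 * Real.pi ^ 2 * k ^ 2 * ((p k).eval t * hcoef (π t) k)
        - (1 / 4 + Real.pi ^ 2 * k ^ 2) * (p k).eval t ^ 2)) (Set.Ioc 0 T) := by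
    refine (ContinuousOn.integrableOn_Icc ?_).mono_set Set.Ioc_subset_Icc_self
    refine continuousOn_finsetSum _ fun k _ => ?_
    have := hcont k
    have := (hpc k).continuousOn (s := Set.Icc 0 T)
    fun_prop
  have hconst : IntegrableOn (fun _ : ℝ => L * δ ^ 2) (Set.Ioc 0 T) :=
    integrable_const _
  have hsum : IntegrableOn (fun t => ∑ k ∈ S, 4 * Real.pi ^ 2 * ((k : ℝ) ^ 2 * hcoef (π t) k ^ 2))
      (Set.Ioc 0 T) := integrable_finsetSum S fun k _ => hint k
  have hsub : IntegrableOn (fun t => (∑ k ∈ S,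
      4 * Real.pi ^ 2 * ((k : ℝ) ^ 2 * hcoef (π t) k ^ 2)) - L * δ ^ 2) (Set.Ioc 0 T) :=
    hsum.sub hconst
  have hmono := setIntegral_mono_on hsub hint2 measurableSet_Ioc hpoint
  rw [integral_sub hsum hconst, integral_finsetSum _ fun k _ => hint k] at hmono
  simp_rw [integral_const_mul (4 * Real.pi ^ 2)] at hmono
  rw [← Finset.mul_sum] at hmono
  rw [le_div_iff₀ (by positivity)]
  have : ∫ t in Set.Ioc 0 T, L * δ ^ 2 = L * T * δ ^ 2 := by
    simp [hT.le]; ring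
  linarith

/-- By Tonelli, the energy bound makes `∑ k² h_k(t)²` finite for almost every `t`. -/
lemma ae_summable {T M : ℝ} {π : ℝ → ℝ → ℝ} (hT : 0 < T) (hM : 0 < M)
    (hπ : Measurable (Function.uncurry π)) (h01 : ∀ t x, π t x ∈ Set.Icc (0 : ℝ) 1)
    (hL : ∀ x, LipschitzOnWith M.toNNReal (fun t => π t x) (Set.Icc 0 T))
    (hJ : BddAbove {r : ℝ | ∃ H : ℝ → ℝ → ℝ, IsC12 H ∧ r = Jfun T H π}) :
    ∀ᵐ t ∂(volume.restrict (Set.Ioc 0 T)),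
      Summable fun k : ℤ => (k : ℝ) ^ 2 * hcoef (π t) k ^ 2 := by
  have h1 : ∀ t x, |π t x| ≤ 1 := fun t x => by
    rw [abs_of_nonneg (h01 t x).1]; exact (h01 t x).2
  obtain ⟨C, hC⟩ := energy_bound hT hM hπ h01 hL hJ
  have hint : ∀ k : ℤ, IntegrableOn (fun t => (k : ℝ) ^ 2 * hcoef (π t) k ^ 2) (Set.Ioc 0 T) :=
    fun k => (((hcoef_continuousOn hM hπ h1 hL k).pow 2).const_mul _).integrableOn_Icc.mono_set
      Set.Ioc_subset_Icc_self
  have hmeas : ∀ k : ℤ, AEMeasurable (fun t => ENNReal.ofReal ((k : ℝ) ^ 2 * hcoef (π t) k ^ 2))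
      (volume.restrict (Set.Ioc 0 T)) := fun k => (hint k).aemeasurable.ennreal_ofReal
  have hfin : ∫⁻ t in Set.Ioc 0 T, ∑' k : ℤ, ENNReal.ofReal ((k : ℝ) ^ 2 * hcoef (π t) k ^ 2)
      ≤ ENNReal.ofReal C := by
    rw [lintegral_tsum hmeas, ENNReal.tsum_eq_iSup_sum]
    refine iSup_le fun S => ?_
    calc _ = ∑ k ∈ S, ENNReal.ofReal (∫ t in Set.Ioc 0 T, (k : ℝ) ^ 2 * hcoef (π t) k ^ 2) :=
          Finset.sum_congr rfl fun k _ => (ofReal_integral_eq_lintegral_ofReal (hint k)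
            (Filter.Eventually.of_forall fun t => by positivity)).symm
      _ = ENNReal.ofReal (∑ k ∈ S, ∫ t in Set.Ioc 0 T, (k : ℝ) ^ 2 * hcoef (π t) k ^ 2) :=
          (ENNReal.ofReal_sum_of_nonneg fun k _ => integral_nonneg fun t => by positivity).symm
      _ ≤ _ := ENNReal.ofReal_le_ofReal (hC S)
  filter_upwards [ae_lt_top' (AEMeasurable.tsum hmeas)
    (hfin.trans_lt ENNReal.ofReal_lt_top).ne] with t ht
  refine (ENNReal.summable_toReal ht.ne).congr fun k => ?_
  exact ENNReal.toReal_ofReal (by positivity)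

/-! ### Hölder continuity from summability of Fourier coefficients -/

/-- The series of the second Bernoulli polynomial, in a form that evaluates
`∑ |e_n(x) - e_n(0)|² / n²` exactly; the `n = 0` term vanishes. -/
lemma hasSum_sq_dist (x : ℝ) (hx : x ∈ Set.Icc (0 : ℝ) 1) :
    HasSum (fun n : ℤ => 1 / (n : ℝ) ^ 2 * (2 - 2 * Real.cos (2 * Real.pi * n * x)))
      (4 * Real.pi ^ 2 * (x - x ^ 2)) := by
  have key : ∀ y ∈ Set.Icc (0 : ℝ) 1, HasSum (fun n : ℕ => 1 / (n : ℝ) ^ 2 *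
      Real.cos (2 * Real.pi * n * y)) (Real.pi ^ 2 * (y ^ 2 - y + 1 / 6)) := fun y hy => by
    have h := hasSum_one_div_nat_pow_mul_cos one_ne_zero hy
    have e := bernoulliFun_two y
    rw [bernoulliFun] at e
    rw [mul_one, e] at h
    have e2 : Real.pi ^ 2 * (y ^ 2 - y + 1 / 6) = (-1) ^ (1 + 1) * (2 * Real.pi) ^ 2 / 2 /
        ((Nat.factorial 2 : ℕ) : ℝ) * (y ^ 2 - y + 6⁻¹) := by
      rw [Nat.factorial_two]; push_cast; ring
    rw [e2]
    exact h
  have h := ((key 0 (by simp)).sub (key x hx)).mul_left 2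
  have hn : HasSum (fun n : ℕ => 1 / (n : ℝ) ^ 2 * (2 - 2 * Real.cos (2 * Real.pi * n * x)))
      (2 * Real.pi ^ 2 * (x - x ^ 2)) := by
    have e1 : (fun n : ℕ => 1 / (n : ℝ) ^ 2 * (2 - 2 * Real.cos (2 * Real.pi * n * x)))
        = fun n : ℕ => 2 * (1 / (n : ℝ) ^ 2 * Real.cos (2 * Real.pi * n * 0)
          - 1 / (n : ℝ) ^ 2 * Real.cos (2 * Real.pi * n * x)) := by
      funext n; rw [mul_zero, Real.cos_zero]; ring
    have e2 : 2 * Real.pi ^ 2 * (x - x ^ 2) = 2 * (Real.pi ^ 2 * (0 ^ 2 - 0 + 1 / 6)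
        - Real.pi ^ 2 * (x ^ 2 - x + 1 / 6)) := by ring
    rw [e1, e2]
    exact h
  have := HasSum.of_nat_of_neg
    (f := fun n : ℤ => 1 / (n : ℝ) ^ 2 * (2 - 2 * Real.cos (2 * Real.pi * n * x)))
    (by simpa using hn) (by simpa using hn)
  have e : 4 * Real.pi ^ 2 * (x - x ^ 2) = 2 * Real.pi ^ 2 * (x - x ^ 2)
      + 2 * Real.pi ^ 2 * (x - x ^ 2)
      - 1 / ((0 : ℤ) : ℝ) ^ 2 * (2 - 2 * Real.cos (2 * Real.pi * (0 : ℤ) * x)) := by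
    simp only [Int.cast_zero, mul_zero, zero_mul, Real.cos_zero]
    ring
  rw [e]
  exact this

lemma norm_fourier_sub_sq (n : ℤ) (x y : ℝ) :
    ‖fourier n (x : AddCircle (1 : ℝ)) - fourier n (y : AddCircle (1 : ℝ))‖ ^ 2
      = 2 - 2 * Real.cos (2 * Real.pi * n * Int.fract |x - y|) := by
  have hexp : ∀ z : ℝ, (fourier n (z : AddCircle (1 : ℝ)) : ℂ)
      = Complex.exp (((2 * Real.pi * n * z : ℝ) : ℂ) * Complex.I) := fun z => by
    rw [fourier_coe_apply]; congr 1; push_cast; ring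
  have hcos : Real.cos (2 * Real.pi * n * Int.fract |x - y|) = Real.cos (2 * Real.pi * n * (x - y)) := by
    have e : 2 * Real.pi * n * Int.fract |x - y|
        = 2 * Real.pi * n * |x - y| - ((n * ⌊|x - y|⌋ : ℤ) : ℝ) * (2 * Real.pi) := by
      rw [Int.fract]; push_cast; ring
    rw [e, Real.cos_sub_int_mul_two_pi]
    rcases abs_choice (x - y) with h | h <;> rw [h]
    rw [mul_neg, Real.cos_neg]
  rw [hcos, hexp, hexp, mul_sub, Real.cos_sub, ← Complex.normSq_eq_norm_sq, Complex.normSq_apply]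
  simp only [Complex.sub_re, Complex.sub_im, Complex.exp_ofReal_mul_I_re,
    Complex.exp_ofReal_mul_I_im]
  nlinarith [Real.sin_sq_add_cos_sq (2 * Real.pi * n * x), Real.sin_sq_add_cos_sq (2 * Real.pi * n * y)]

/-- Since `e^{-iθ} = cas(θ) (1 - i) / 2 + cas(-θ) (1 + i) / 2`, Fourier coefficients are controlled by
Hartley coefficients. -/
lemma norm_fourierCoeff_le {f : ℝ → ℝ} (hf : Measurable f) (h1 : ∀ x, |f x| ≤ 1) (n : ℤ) :
    ‖fourierCoeff (AddCircle.liftIoc (1 : ℝ) 0 fun x => (f x : ℂ)) n‖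
      ≤ |hcoef f n| + |hcoef f (-n)| := by
  have hint : ∀ k : ℤ, IntegrableOn (fun x => f x * cas k x) (Set.Ioc 0 1) := fun k =>
    integrable_mul_slice hf h1 (by fun_prop) 0 1
  have e : fourierCoeff (AddCircle.liftIoc (1 : ℝ) 0 fun x => (f x : ℂ)) n
      = (hcoef f n : ℂ) * ((1 - Complex.I) / 2) + (hcoef f (-n) : ℂ) * ((1 + Complex.I) / 2) := by
    rw [fourierCoeff_eq_intervalIntegral _ _ 0, intervalIntegral.integral_of_le (by norm_num)]
    simp only [zero_add, div_one, one_smul, hcoef]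
    rw [← integral_complex_ofReal, ← integral_complex_ofReal, ← integral_mul_const,
      ← integral_mul_const, ← integral_add ((hint n).ofReal.mul_const _)
        ((hint (-n)).ofReal.mul_const _)]
    refine setIntegral_congr_fun measurableSet_Ioc fun x hx => ?_
    rw [AddCircle.liftIoc_coe_apply (by simpa using hx), fourier_coe_apply]
    have : 2 * (Real.pi : ℂ) * Complex.I * ((-n : ℤ) : ℂ) * (x : ℂ) / ((1 : ℝ) : ℂ)
        = ((-(2 * Real.pi * n * x) : ℝ) : ℂ) * Complex.I := by push_cast; ring
    rw [this, Complex.exp_mul_I]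
    simp only [cas, smul_eq_mul]
    push_cast
    simp only [Complex.cos_neg, Complex.sin_neg, mul_neg, neg_mul]
    ring
  have hI : ‖(1 - Complex.I) / 2‖ ≤ 1 := by
    rw [norm_div, Complex.norm_ofNat]
    have := norm_sub_le (1 : ℂ) Complex.I
    simp only [norm_one, Complex.norm_I] at this
    linarith
  have hI' : ‖(1 + Complex.I) / 2‖ ≤ 1 := by
    rw [norm_div, Complex.norm_ofNat]
    have := norm_add_le (1 : ℂ) Complex.I
    simp only [norm_one, Complex.norm_I] at this
    linarith
  rw [e]
  refine (norm_add_le _ _).trans (add_le_add ?_ ?_) <;>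
  · rw [norm_mul, Complex.norm_real, Real.norm_eq_abs]
    exact mul_le_of_le_one_right (abs_nonneg _) (by assumption)

/-- The embedding `H¹(𝕋) ⊆ C^{1/2}(𝕋)` in Fourier form: a function with `∑ k² h_k² < ∞` agrees almost
everywhere with a `1/2`-Hölder function, the sum of its Fourier series. -/
lemma holder_of_summable {f : ℝ → ℝ} (hf : Measurable f) (h1 : ∀ x, |f x| ≤ 1)
    (hs : Summable fun k : ℤ => (k : ℝ) ^ 2 * hcoef f k ^ 2) :
    ∃ (g : ℝ → ℝ) (C : NNReal), HolderWith C (1 / 2 : NNReal) g ∧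
      ∀ᵐ x ∂(volume.restrict (Set.Ioc (0 : ℝ) 1)), f x = g x := by
  set F : AddCircle (1 : ℝ) → ℂ := AddCircle.liftIoc (1 : ℝ) 0 fun x => (f x : ℂ) with hF
  set c : ℤ → ℂ := fourierCoeff F with hc
  have hb : Summable fun n : ℤ => (n : ℝ) ^ 2 * ‖c n‖ ^ 2 := by
    have hs' : Summable fun k : ℤ => (k : ℝ) ^ 2 * hcoef f (-k) ^ 2 := by
      refine ((Equiv.neg ℤ).summable_iff.2 hs).congr fun k => ?_
      simp
    refine Summable.of_nonneg_of_le (fun n => by positivity) (fun n => ?_)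
      ((hs.add hs').mul_left 2)
    have h := norm_fourierCoeff_le hf h1 n
    have h2 : ‖c n‖ ^ 2 ≤ 2 * (hcoef f n ^ 2 + hcoef f (-n) ^ 2) := by
      calc ‖c n‖ ^ 2 ≤ (|hcoef f n| + |hcoef f (-n)|) ^ 2 := by gcongr
        _ ≤ _ := by
          nlinarith [sq_nonneg (|hcoef f n| - |hcoef f (-n)|), sq_abs (hcoef f n),
            sq_abs (hcoef f (-n))]
    nlinarith [mul_le_mul_of_nonneg_left h2 (sq_nonneg (n : ℝ))]
  have hcs : Summable fun n : ℤ => ‖c n‖ := by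
    have h2 : Summable fun n : ℤ => 1 / (n : ℝ) ^ 2 :=
      Real.summable_one_div_int_pow.2 (by norm_num)
    refine Summable.of_nonneg_of_le (fun n => norm_nonneg _) (fun n => ?_)
      ((hb.add h2).add (hasSum_ite_eq (0 : ℤ) ‖c 0‖).summable)
    by_cases hn : n = 0
    · simp [hn]
    · have hn' : (n : ℝ) ≠ 0 := by exact_mod_cast hn
      have e : ‖c n‖ = (|(n : ℝ)| * ‖c n‖) * (1 / |(n : ℝ)|) := by field_simp
      have e1 : (|(n : ℝ)| * ‖c n‖) ^ 2 = (n : ℝ) ^ 2 * ‖c n‖ ^ 2 := by rw [mul_pow, sq_abs]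
      have e2 : (1 / |(n : ℝ)|) ^ 2 = 1 / (n : ℝ) ^ 2 := by rw [div_pow, sq_abs, one_pow]
      simp only [hn, if_false, add_zero]
      rw [← e1, ← e2]
      nlinarith [sq_nonneg (|(n : ℝ)| * ‖c n‖ - 1 / |(n : ℝ)|), norm_nonneg (c n),
        sq_nonneg (|(n : ℝ)| * ‖c n‖ + 1 / |(n : ℝ)|)]
  have hsumC : Summable fun n : ℤ => c n • (fourier n : C(AddCircle (1 : ℝ), ℂ)) := by
    refine Summable.of_norm ?_
    simpa [norm_smul, fourier_norm] using hcs
  obtain ⟨G, hG⟩ := hsumC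
  have hGx : ∀ x : ℝ, HasSum (fun n : ℤ => c n * fourier n (x : AddCircle (1 : ℝ)))
      (G (x : AddCircle (1 : ℝ))) := fun x => by
    simpa using (ContinuousMap.evalCLM ℂ (x : AddCircle (1 : ℝ))).hasSum hG
  -- The absolutely convergent series `G` and the `L²` function `F` have the same Fourier series in
  -- `L²`, so they agree almost everywhere.
  have hFG : F =ᵐ[AddCircle.haarAddCircle] G := by
    have hFm : Measurable F := by
      have : F = (fun x : ℝ => (f x : ℂ)) ∘ Subtype.val ∘ AddCircle.measurableEquivIoc (1 : ℝ) 0 :=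
        rfl
      rw [this]
      exact (Complex.measurable_ofReal.comp hf).comp
        (measurable_subtype_coe.comp (AddCircle.measurableEquivIoc (1 : ℝ) 0).measurable)
    have hFL : MemLp F 2 (@AddCircle.haarAddCircle (1 : ℝ) _) :=
      MemLp.of_bound hFm.aestronglyMeasurable 1 (Filter.Eventually.of_forall fun z => by
        change ‖((f _ : ℝ) : ℂ)‖ ≤ 1
        rw [Complex.norm_real]; exact h1 _)
    have s1 := hasSum_fourier_series_L2 (hFL.toLp F)
    rw [fourierCoeff_congr_ae hFL.coeFn_toLp] at s1
    have s2 := (ContinuousMap.toLp (E := ℂ) 2 AddCircle.haarAddCircle ℂ).hasSum hG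
    simp only [map_smul] at s2
    have s3 := s1.unique s2
    exact hFL.coeFn_toLp.symm.trans (s3 ▸ ContinuousMap.coeFn_toLp AddCircle.haarAddCircle G)
  set B := ∑' n : ℤ, (n : ℝ) ^ 2 * ‖c n‖ ^ 2 with hB
  have hB0 : 0 ≤ B := tsum_nonneg fun n => by positivity
  have hbound : ∀ x y : ℝ, |(G (x : AddCircle (1 : ℝ))).re - (G (y : AddCircle (1 : ℝ))).re|
      ≤ (B + 4 * Real.pi ^ 2) / 2 * √|x - y| := by
    intro x y
    rcases eq_or_ne x y with rfl | hxy
    · simp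
    have hh : 0 < |x - y| := abs_pos.2 (sub_ne_zero.2 hxy)
    set h := |x - y|
    have hsq : √h ^ 2 = h := Real.sq_sqrt hh.le
    have hsq0 : 0 < √h := Real.sqrt_pos.2 hh
    have hD : HasSum (fun n : ℤ => 1 / (n : ℝ) ^ 2 *
        ‖fourier n (x : AddCircle (1 : ℝ)) - fourier n (y : AddCircle (1 : ℝ))‖ ^ 2)
        (4 * Real.pi ^ 2 * (Int.fract h - Int.fract h ^ 2)) := by
      simp_rw [norm_fourier_sub_sq]
      exact hasSum_sq_dist (Int.fract h) ⟨Int.fract_nonneg _, (Int.fract_lt_one _).le⟩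
    -- AM-GM with the weight `√h`: the second series sums to at most `4π² h`, so both parts of the
    -- majorant are of order `√h`.
    have hmaj := (hb.hasSum.mul_left (√h / 2)).add (hD.mul_left (1 / (2 * √h)))
    have hdiff := (hGx x).sub (hGx y)
    have hterm : ∀ n : ℤ, ‖c n * fourier n (x : AddCircle (1 : ℝ)) - c n * fourier n (y : AddCircle (1 : ℝ))‖
        ≤ √h / 2 * ((n : ℝ) ^ 2 * ‖c n‖ ^ 2) + 1 / (2 * √h) * (1 / (n : ℝ) ^ 2 *
          ‖fourier n (x : AddCircle (1 : ℝ)) - fourier n (y : AddCircle (1 : ℝ))‖ ^ 2) := by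
      intro n
      rw [← mul_sub, norm_mul]
      set D := ‖fourier n (x : AddCircle (1 : ℝ)) - fourier n (y : AddCircle (1 : ℝ))‖ with hDdef
      rcases eq_or_ne n 0 with rfl | hn
      · have : D = 0 := by simp [hDdef]
        simp [this]
      · have hn' : (n : ℝ) ≠ 0 := by exact_mod_cast hn
        have hn2 : 0 < (n : ℝ) ^ 2 := by positivity
        have e : √h / 2 * ((n : ℝ) ^ 2 * ‖c n‖ ^ 2) + 1 / (2 * √h) * (1 / (n : ℝ) ^ 2 * D ^ 2)
            - ‖c n‖ * D = (√h * (n : ℝ) ^ 2 * ‖c n‖ - D) ^ 2 / (2 * √h * (n : ℝ) ^ 2) := by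
          field_simp
          ring
        have : 0 ≤ (√h * (n : ℝ) ^ 2 * ‖c n‖ - D) ^ 2 / (2 * √h * (n : ℝ) ^ 2) := by positivity
        linarith
    have hnorm := tsum_of_norm_bounded hmaj hterm
    rw [hdiff.tsum_eq] at hnorm
    rw [← Complex.sub_re]
    refine (Complex.abs_re_le_norm _).trans (hnorm.trans ?_)
    have hfr : Int.fract h - Int.fract h ^ 2 ≤ h := by
      have : (0 : ℝ) ≤ ⌊h⌋ := by exact_mod_cast Int.floor_nonneg.2 hh.le
      have e : Int.fract h = h - ⌊h⌋ := rfl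
      nlinarith [sq_nonneg (Int.fract h)]
    calc √h / 2 * B + 1 / (2 * √h) * (4 * Real.pi ^ 2 * (Int.fract h - Int.fract h ^ 2))
        ≤ √h / 2 * B + 1 / (2 * √h) * (4 * Real.pi ^ 2 * √h ^ 2) := by rw [hsq]; gcongr
      _ = _ := by field_simp
  refine ⟨fun x => (G (x : AddCircle (1 : ℝ))).re, ((B + 4 * Real.pi ^ 2) / 2).toNNReal, ?_, ?_⟩
  · intro x y
    have hC0 : 0 ≤ (B + 4 * Real.pi ^ 2) / 2 := by positivity
    rw [edist_dist, edist_dist, Real.dist_eq, Real.dist_eq,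
      ENNReal.ofReal_rpow_of_nonneg (abs_nonneg _) (by positivity), ← ENNReal.ofReal_coe_nnreal,
      Real.coe_toNNReal _ hC0, ← ENNReal.ofReal_mul hC0]
    refine ENNReal.ofReal_le_ofReal ((hbound x y).trans_eq ?_)
    rw [Real.sqrt_eq_rpow]
    norm_num
  · have hvol : F =ᵐ[volume] G := by
      rw [AddCircle.volume_eq_smul_haarAddCircle]
      simpa using hFG
    have hmp := AddCircle.measurePreserving_mk (1 : ℝ) 0
    rw [zero_add] at hmp
    filter_upwards [hmp.quasiMeasurePreserving.ae hvol, ae_restrict_mem measurableSet_Ioc]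
      with x hx hxm
    rw [hF, AddCircle.liftIoc_coe_apply (by simpa using hxm)] at hx
    rw [← hx, Complex.ofReal_re]

/-! ### Regularity of the density -/

lemma lipschitz_of_ac {T M : ℝ} (hM : 0 < M) {f g : ℝ → ℝ} (hg : Measurable g)
    (hgM : ∀ t, |g t| ≤ M) (hAC : ∀ t ∈ Set.Icc 0 T, f t = f 0 + ∫ s in (0 : ℝ)..t, g s) :
    LipschitzOnWith M.toNNReal f (Set.Icc 0 T) := by
  have hi : ∀ a b : ℝ, IntervalIntegrable g volume a b := fun a b =>
    (intervalIntegrable_const (c := M)).mono_fun hg.aestronglyMeasurable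
      (Filter.Eventually.of_forall fun t => by
        simpa [abs_of_pos hM] using hgM t)
  refine LipschitzOnWith.of_dist_le_mul fun s hs t ht => ?_
  rw [Real.dist_eq, Real.dist_eq, Real.coe_toNNReal _ hM.le, hAC s hs, hAC t ht, add_sub_add_left_eq_sub,
    intervalIntegral.integral_interval_sub_left (hi _ _) (hi _ _)]
  rw [← Real.norm_eq_abs]
  exact intervalIntegral.norm_integral_le_of_norm_le_const fun u _ => hgM u

/-- Let `π : [0,T] × 𝕋 → [0,1]` be Borel measurable, with a
bounded Borel time derivative `π̇` in the sense that
`π(t,x) = π(0,x) + ∫₀ᵗ π̇(s,x) ds`.  If `sup_{H ∈ C^{1,2}} J(H;π) < ∞`, then for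
almost every `t ∈ [0,T]` the function `x ↦ π(t,x)` agrees a.e. with a
`1/2`-Hölder continuous function. -/
theorem holder_density_of_finite_J (T M : ℝ) (hT : 0 < T) (hM : 0 < M)
    (π πdot : ℝ → ℝ → ℝ)
    (hπmeas : Measurable (Function.uncurry π))
    (hπ01 : ∀ t x, π t x ∈ Set.Icc (0 : ℝ) 1)
    (hπper : ∀ t x, π t (x + 1) = π t x)
    (hπdotmeas : Measurable (Function.uncurry πdot))
    (hπdotbd : ∀ t x, |πdot t x| ≤ M)
    (hAC : ∀ t ∈ Set.Icc 0 T, ∀ x : ℝ, π t x = π 0 x + ∫ s in (0 : ℝ)..t, πdot s x)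
    (hJ : BddAbove {r : ℝ | ∃ H : ℝ → ℝ → ℝ, IsC12 H ∧ r = Jfun T H π}) :
    ∀ᵐ t ∂(volume.restrict (Set.Ioc 0 T)),
      ∃ (g : ℝ → ℝ) (C : NNReal), HolderWith C (1 / 2 : NNReal) g ∧
        ∀ᵐ x ∂(volume.restrict (Set.Ioc (0 : ℝ) 1)), π t x = g x := by
  have hL : ∀ x, LipschitzOnWith M.toNNReal (fun t => π t x) (Set.Icc 0 T) := fun x =>
    lipschitz_of_ac hM (g := fun s => πdot s x) hπdotmeas.of_uncurry_right
      (fun t => hπdotbd t x) fun t ht => hAC t ht x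
  filter_upwards [ae_summable hT hM hπmeas hπ01 hL hJ] with t ht
  exact holder_of_summable hπmeas.of_uncurry_left
    (fun x => abs_le.2 ⟨by linarith [(hπ01 t x).1], (hπ01 t x).2⟩) ht

end
end
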